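/- arXiv:2512.06741 — 3 statements merged into one kernel-verified Lean document; each statement's English description precedes it below -/
import Mathlib

section
/- Let β > 1 and let φ : ℕ → ℝ be non-decreasing with η := liminf_{n→∞} φ(n)/n ≥ 1. Then the Hausdorff dimension of { x ∈ [0,1] : liminf_{n→∞} (1/φ(n)) log_β |x − ω_n(x)| = −1 } equals 1/η. -/
open Filter MeasureTheory Set

noncomputable def Tb (β : ℝ) (x : ℝ) : ℝ := Int.fract (β * x)

/-- `dig β x n` is the (n+1)-st digit `ε_{n+1}(x)` of the β-expansion of `x`. -/
noncomputable def dig (β : ℝ) (x : ℝ) (n : ℕ) : ℤ := ⌊β * (Tb β)^[n] x⌋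

/-- `conv β x n` is the n-th convergent `ω_n(x)` of the β-expansion of `x`. -/
noncomputable def conv (β : ℝ) (x : ℝ) (n : ℕ) : ℝ :=
  ∑ k ∈ Finset.range n, (dig β x k : ℝ) / β ^ (k + 1)

/-- The n-th order cylinder determined by the word `w`. -/
def cyl (β : ℝ) {n : ℕ} (w : Fin n → ℤ) : Set ℝ :=
  {x ∈ Set.Ico (0:ℝ) 1 | ∀ k : Fin n, dig β x k = w k}

/-- A finite word is β-admissible if it is the beginning of the β-expansion of some x ∈ [0,1]. -/
def admissible (β : ℝ) {n : ℕ} (w : Fin n → ℤ) : Prop :=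
  ∃ x ∈ Set.Icc (0:ℝ) 1, ∀ k : Fin n, dig β x k = w k

/-! A point `x` with the prescribed rate satisfies `|x - ω_n(x)| ≤ β ^ (-θ n)` for infinitely many
`n`, for every `θ < η`. By Rényi's argument there are at most `(n + 1) β ^ n` convergents of order
`n`, so covering by balls of radius `β ^ (-θ n)` around them bounds the dimension by `1 / θ`.

Conversely, the same count shows that there are about `β ^ N` full words of length `N`, up to a
subexponential factor. Full words can be concatenated freely, so choosing nonzero full words as
blocks, except for very sparse runs of zero blocks, produces points of `[0, 1)`. A zero run which
starts at order `n`, where `φ n / n` is close to `η`, and ends at order `φ n` forces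
`|x - ω_n(x)| ≤ β ^ (-φ n)`, whereas a nonzero block following soon after order `n` bounds
`|x - ω_n(x)|` from below. Up to any position `m`, at least about `m / η` of the blocks are free to
choose, so reading them off as digits is Hölder of every exponent less than `1 / η`. -/

section HausdorffDimension

lemma ediam_le_of_ediam_rpow_le {X : Type*} [PseudoEMetricSpace X] {A : Set X} {s : ℝ} (hs : 0 < s)
    {u : ENNReal} (h : Metric.ediam A ^ s ≤ u) : Metric.ediam A ≤ u ^ (1 / s) := by
  rwa [one_div, ENNReal.le_rpow_inv_iff hs]

lemma hausdorffMeasure_frequently_mem_eq_zero {X ι : Type*} [EMetricSpace X] [MeasurableSpace X]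
    [BorelSpace X] [Countable ι] {s : ℝ} (hs : 0 < s) {t : ι → Set X}
    (ht : ∑' i, Metric.ediam (t i) ^ s ≠ ⊤) :
    μH[s] {x | ∃ᶠ i in cofinite, x ∈ t i} = 0 := by
  let tail : Finset ι → ENNReal := fun F => ∑' i : {i // i ∉ F}, Metric.ediam (t i) ^ s
  have htail : Tendsto tail atTop (nhds 0) := ENNReal.tendsto_tsum_compl_atTop_zero ht
  have hradius : Tendsto (fun F => tail F ^ (1 / s)) atTop (nhds 0) := by
    simpa [hs, Function.comp_def] using
      (ENNReal.continuous_rpow_const (y := 1 / s)).continuousAt.tendsto.comp htail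
  refine le_antisymm ?_ bot_le
  calc μH[s] {x | ∃ᶠ i in cofinite, x ∈ t i} ≤ liminf tail atTop := by
        refine Measure.hausdorffMeasure_le_liminf_tsum s _ _ hradius
          (fun F (i : {i // i ∉ F}) => t i) (.of_forall fun F i => ?_) (.of_forall fun F x hx => ?_)
        · exact ediam_le_of_ediam_rpow_le hs
            (ENNReal.le_tsum (f := fun i : {i // i ∉ F} => Metric.ediam (t i) ^ s) i)
        · obtain ⟨i, hxi, hiF⟩ :=
            (hx.and_eventually F.finite_toSet.eventually_cofinite_notMem).exists
          exact mem_iUnion.2 ⟨⟨i, hiF⟩, hxi⟩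
    _ = 0 := htail.liminf_eq

/-- A coding `g` by `M`-ary sequences satisfying the hypothesis has an `r`-Hölder inverse, up to
the map sending a sequence to the number in `[0, 1]` with these digits. -/
lemma le_dimH_range_of_inv_pow_firstDiff_le {X : Type*} [MetricSpace X] {M : ℕ} (hM : 1 < M)
    {C r : NNReal} (hr : 0 < r) {g : (ℕ → Fin M) → X}
    (hg : ∀ a b, a ≠ b → ((M : ℝ) ^ PiNat.firstDiff a b)⁻¹ ≤ C * dist (g a) (g b) ^ (r : ℝ)) :
    (r : ENNReal) ≤ dimH (range g) := by
  have hinj : Function.Injective g := by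
    intro a b hab
    by_contra hne
    have : (0 : ℝ) < M := by positivity
    have hpos : 0 < ((M : ℝ) ^ PiNat.firstDiff a b)⁻¹ := by positivity
    have hle := hg a b hne
    rw [hab, dist_self, Real.zero_rpow (NNReal.coe_pos.2 hr).ne', mul_zero] at hle
    exact hle.not_gt hpos
  have : Nonempty (ℕ → Fin M) := ⟨fun _ => ⟨0, by omega⟩⟩
  let decode : X → ℝ := fun x => Real.ofDigits (Function.invFun g x)
  have hdecode : ∀ a, decode (g a) = Real.ofDigits a := fun a =>
    congrArg Real.ofDigits (Function.leftInverse_invFun hinj a)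
  have hholder : HolderOnWith C r decode (range g) := by
    rintro _ ⟨a, rfl⟩ _ ⟨b, rfl⟩
    rcases eq_or_ne a b with rfl | hab
    · simp
    · rw [hdecode, hdecode, edist_dist, edist_dist, Real.dist_eq,
        ENNReal.ofReal_rpow_of_nonneg dist_nonneg r.coe_nonneg, ← ENNReal.ofReal_coe_nnreal,
        ← ENNReal.ofReal_mul C.coe_nonneg]
      exact ENNReal.ofReal_le_ofReal <| (Real.abs_ofDigits_sub_ofDigits_le fun _ =>
        PiNat.apply_eq_of_lt_firstDiff).trans (hg a b hab)
  have hsurj : Icc 0 1 ⊆ decode '' range g := by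
    intro z hz
    obtain ⟨a, -, rfl⟩ := Real.ofDigits_SurjOn hM hz
    exact ⟨g a, mem_range_self a, hdecode a⟩
  have hunit : dimH (Icc (0 : ℝ) 1) = 1 := by
    rw [Real.dimH_of_nonempty_interior (by simp), Module.finrank_self, Nat.cast_one]
  have hdim : 1 ≤ dimH (range g) / r :=
    hunit.symm.le.trans ((dimH_mono hsurj).trans (hholder.dimH_image_le hr))
  simpa using ENNReal.mul_le_of_le_div hdim

end HausdorffDimension

section Liminf

variable {ι : Type*} {l : Filter ι} {f : ι → ℝ}

-- In `ℝ`, `liminf` takes the junk value `0` when the eventual lower bounds are empty or unbounded.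
lemma isBoundedUnder_ge_of_liminf_ne_zero (h : liminf f l ≠ 0) :
    IsBoundedUnder (· ≥ ·) l f := by
  rw [liminf_eq] at h
  by_contra hunbdd
  have hempty : {a | ∀ᶠ i in l, a ≤ f i} = ∅ :=
    eq_empty_of_forall_notMem fun a ha => hunbdd ⟨a, ha⟩
  exact h (by rw [hempty, Real.sSup_empty])

lemma isCoboundedUnder_ge_of_liminf_ne_zero (h : liminf f l ≠ 0) :
    IsCoboundedUnder (· ≥ ·) l f := by
  rw [liminf_eq] at h
  by_contra hunbdd
  exact h (Real.sSup_of_not_bddAbove fun ⟨b, hb⟩ => hunbdd ⟨b, fun a ha => hb ha⟩)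

lemma liminf_eq_of_frequently_le_of_eventually_le {L : ℝ} (hle : ∃ᶠ i in l, f i ≤ L)
    (hge : ∀ b < L, ∀ᶠ i in l, b ≤ f i) : liminf f l = L := by
  have hbdd : IsBoundedUnder (· ≥ ·) l f := ⟨L - 1, hge _ (sub_one_lt L)⟩
  have hcobdd : IsCoboundedUnder (· ≥ ·) l f := IsCoboundedUnder.of_frequently_le hle
  exact le_antisymm (liminf_le_of_frequently_le hle hbdd)
    (le_of_forall_lt_imp_le_of_dense fun b hb => le_liminf_of_le hcobdd (hge b hb))

variable {φ : ℕ → ℝ} {η θ : ℝ}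

lemma eventually_mul_lt_of_liminf_div (hη : liminf (fun n : ℕ => φ n / n) atTop = η) (hη0 : η ≠ 0)
    (hθ : θ < η) : ∀ᶠ n : ℕ in atTop, θ * n < φ n := by
  subst hη
  filter_upwards [eventually_lt_of_lt_liminf hθ (isBoundedUnder_ge_of_liminf_ne_zero hη0),
    eventually_gt_atTop 0] with n hn hn0
  rwa [lt_div_iff₀ (Nat.cast_pos.2 hn0)] at hn

lemma frequently_lt_mul_of_liminf_div (hη : liminf (fun n : ℕ => φ n / n) atTop = η) (hη0 : η ≠ 0)
    (hθ : η < θ) : ∃ᶠ n : ℕ in atTop, φ n < θ * n := by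
  subst hη
  refine ((frequently_lt_of_liminf_lt (isCoboundedUnder_ge_of_liminf_ne_zero hη0)
    hθ).and_eventually (eventually_gt_atTop 0)).mono fun n hn => ?_
  rw [← div_lt_iff₀ (Nat.cast_pos.2 hn.2)]
  exact hn.1

lemma liminf_div_eq_neg_one {v : ℕ → ℝ} (hη : liminf (fun n : ℕ => φ n / n) atTop = η)
    (hη0 : 0 < η) (hle : ∃ᶠ n in atTop, v n ≤ -φ n)
    (hge : ∀ θ, η < θ → ∀ᶠ n : ℕ in atTop, -(θ * n) ≤ v n) :
    liminf (fun n => v n / φ n) atTop = -1 := by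
  have hφ : ∀ θ < η, ∀ᶠ n : ℕ in atTop, θ * n < φ n := fun θ =>
    eventually_mul_lt_of_liminf_div hη hη0.ne'
  refine liminf_eq_of_frequently_le_of_eventually_le ?_ fun b hb => ?_
  · refine (hle.and_eventually (hφ 0 hη0)).mono fun n hn => ?_
    rw [div_le_iff₀ (by simpa using hn.2), neg_one_mul]
    exact hn.1
  · have hb' : 1 < -b := by linarith
    obtain ⟨θ, hθ, hθη⟩ := exists_between (div_lt_self hη0 hb')
    have hθ0 : 0 < θ := (div_pos hη0 (by linarith)).trans hθ
    rw [div_lt_iff₀' (by linarith)] at hθ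
    filter_upwards [hge _ hθ, hφ θ hθη] with n hv hφn
    have hφ0 : 0 < φ n := (by positivity : 0 ≤ θ * (n : ℝ)).trans_lt hφn
    rw [le_div_iff₀ hφ0]
    calc b * φ n ≤ b * (θ * n) := mul_le_mul_of_nonpos_left hφn.le (by linarith)
      _ = -(-b * θ * n) := by ring
      _ ≤ v n := hv

end Liminf

section Expansion

variable {β x : ℝ}

lemma iterate_Tb_succ (β x : ℝ) (n : ℕ) : (Tb β)^[n + 1] x = β * (Tb β)^[n] x - dig β x n :=
  Function.iterate_succ_apply' (Tb β) n x

lemma iterate_Tb_mem_Ico (β : ℝ) (hx : x ∈ Ico 0 1) (n : ℕ) : (Tb β)^[n] x ∈ Ico 0 1 := by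
  cases n with
  | zero => exact hx
  | succ n =>
    rw [Function.iterate_succ_apply']
    exact ⟨Int.fract_nonneg _, Int.fract_lt_one _⟩

lemma dig_nonneg (hβ : 0 ≤ β) (hx : x ∈ Ico 0 1) (n : ℕ) : 0 ≤ dig β x n :=
  Int.floor_nonneg.2 (mul_nonneg hβ (iterate_Tb_mem_Ico β hx n).1)

lemma conv_succ (β x : ℝ) (n : ℕ) :
    conv β x (n + 1) = conv β x n + dig β x n / β ^ (n + 1) :=
  Finset.sum_range_succ _ n

lemma conv_mono (hβ : 0 ≤ β) (hx : x ∈ Ico 0 1) : Monotone (conv β x) := by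
  refine monotone_nat_of_le_succ fun n => ?_
  have hdig : (0 : ℝ) ≤ dig β x n := Int.cast_nonneg (dig_nonneg hβ hx n)
  rw [conv_succ]
  exact le_add_of_nonneg_right (by positivity)

lemma sub_conv (hβ : β ≠ 0) (x : ℝ) (n : ℕ) : x - conv β x n = (Tb β)^[n] x / β ^ n := by
  induction n with
  | zero => simp [conv]
  | succ n ih =>
    rw [conv_succ, iterate_Tb_succ, ← sub_sub, ih]
    field_simp
    ring

lemma abs_sub_conv (hβ : 0 < β) (hx : x ∈ Ico 0 1) (n : ℕ) :
    |x - conv β x n| = (Tb β)^[n] x / β ^ n := by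
  rw [sub_conv hβ.ne', abs_of_nonneg (div_nonneg (iterate_Tb_mem_Ico β hx n).1 (by positivity))]

lemma abs_sub_conv_antitone (hβ : 0 < β) (hx : x ∈ Ico 0 1) :
    Antitone fun n => |x - conv β x n| := by
  intro m n hmn
  simp only [abs_sub_conv hβ hx, ← sub_conv hβ.ne']
  exact sub_le_sub_left (conv_mono hβ.le hx hmn) x

end Expansion

section FullCylinders

variable {β : ℝ} {n : ℕ}

/-- `IsBranch β n a τ`: the interval `[a, a + τ / β ^ n)` lies in `[0, 1)` and is mapped by
`Tb β ^ n` affinely onto `[0, τ)`. This is the shape of every cylinder of order `n`. -/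
def IsBranch (β : ℝ) (n : ℕ) (a τ : ℝ) : Prop :=
  ∀ t ∈ Ico 0 τ, a + t / β ^ n ∈ Ico (0 : ℝ) 1 ∧ (Tb β)^[n] (a + t / β ^ n) = t

/-- The left endpoints of the full cylinders of order `n`, that is, of the intervals of length
`β⁻ⁿ` mapped onto `[0, 1)` by `Tb β ^ n`. They encode the full words of length `n`. -/
def fullEndpoints (β : ℝ) (n : ℕ) : Set ℝ := {a | IsBranch β n a 1}

lemma IsBranch.step {a τ τ' : ℝ} (hβ : 0 < β) (h : IsBranch β n a τ) {d : ℤ} (hd : 0 ≤ d)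
    (hτ1 : τ' ≤ 1) (hτ : d + τ' ≤ β * τ) : IsBranch β (n + 1) (a + d / β ^ (n + 1)) τ' := by
  rintro t ⟨ht0, htτ⟩
  have : (0 : ℝ) ≤ d := Int.cast_nonneg hd
  have hpoint : a + d / β ^ (n + 1) + t / β ^ (n + 1) = a + (d + t) / β / β ^ n := by
    field_simp
    ring
  obtain ⟨hmem, hiter⟩ := h ((d + t) / β) ⟨by positivity, by rw [div_lt_iff₀' hβ]; linarith⟩
  rw [hpoint, Function.iterate_succ_apply', hiter]
  refine ⟨hmem, ?_⟩
  rw [Tb, mul_div_cancel₀ _ hβ.ne', Int.fract_intCast_add, Int.fract_eq_self]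
  exact ⟨ht0, htτ.trans_le hτ1⟩

lemma fullEndpoints_mono (hβ : 1 < β) : Monotone (fullEndpoints β) := by
  refine monotone_nat_of_le_succ fun n a ha => ?_
  simpa [fullEndpoints] using
    IsBranch.step (zero_lt_one.trans hβ) ha (d := 0) (τ' := 1) le_rfl le_rfl (by simpa using hβ.le)

lemma zero_mem_fullEndpoints (hβ : 1 < β) (n : ℕ) : (0 : ℝ) ∈ fullEndpoints β n :=
  fullEndpoints_mono hβ (Nat.zero_le n) fun t ht => by simpa using ht

lemma fullEndpoints_subset_Icc (hβ : 0 < β) : fullEndpoints β n ⊆ Icc 0 (1 - (β ^ n)⁻¹) := by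
  intro a ha
  have ha01 : a ∈ Ico (0 : ℝ) 1 := by simpa using (ha 0 (by simp)).1
  refine ⟨ha01.1, ?_⟩
  by_contra! hlt
  have hpow : 0 < β ^ n := by positivity
  have ht : (1 - a) * β ^ n < 1 := by rw [← lt_div_iff₀ hpow, one_div]; linarith
  have hout := (ha _ ⟨mul_nonneg (by linarith [ha01.2]) hpow.le, ht⟩).1.2
  rw [mul_div_cancel_right₀ _ hpow.ne'] at hout
  linarith

lemma add_inv_pow_le_of_mem_fullEndpoints (hβ : 0 < β) {a b : ℝ} (ha : a ∈ fullEndpoints β n)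
    (hb : b ∈ fullEndpoints β n) (hab : a < b) : a + (β ^ n)⁻¹ ≤ b := by
  by_contra! hlt
  have hpow : 0 < β ^ n := by positivity
  have ht0 : 0 < (b - a) * β ^ n := mul_pos (by linarith) hpow
  have ht1 : (b - a) * β ^ n < 1 := by rw [← lt_div_iff₀ hpow, one_div]; linarith
  have hiter := (ha _ ⟨ht0.le, ht1⟩).2
  rw [mul_div_cancel_right₀ _ hpow.ne', add_sub_cancel] at hiter
  have hzero : (Tb β)^[n] b = 0 := by simpa using (hb 0 (by simp)).2
  linarith

lemma pairwise_inv_pow_le_abs_sub_fullEndpoints (hβ : 0 < β) :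
    (fullEndpoints β n).Pairwise fun a b => (β ^ n)⁻¹ ≤ |a - b| := by
  intro a ha b hb hab
  rcases hab.lt_or_gt with hlt | hlt
  · rw [abs_sub_comm]
    exact (by linarith [add_inv_pow_le_of_mem_fullEndpoints hβ ha hb hlt] :
      (β ^ n)⁻¹ ≤ b - a).trans (le_abs_self _)
  · exact (by linarith [add_inv_pow_le_of_mem_fullEndpoints hβ hb ha hlt] :
      (β ^ n)⁻¹ ≤ a - b).trans (le_abs_self _)

end FullCylinders

section Counting

lemma encard_le_floor_of_pairwise_le_abs_sub {S : Set ℝ} {δ : ℝ} (hδ : 0 < δ)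
    (hS : S ⊆ Icc 0 (1 - δ)) (hsep : S.Pairwise fun a b => δ ≤ |a - b|) :
    S.encard ≤ ⌊δ⁻¹⌋₊ := by
  have hmaps : MapsTo (fun a => ⌊a / δ⌋₊) S (Finset.range ⌊δ⁻¹⌋₊ : Finset ℕ) := by
    intro a ha
    have ha0 : 0 ≤ a / δ := div_nonneg (hS ha).1 hδ.le
    have hle : a / δ + 1 ≤ δ⁻¹ := by
      rw [← div_self hδ.ne', ← add_div, inv_eq_one_div]
      exact div_le_div_of_nonneg_right (by linarith [(hS ha).2]) hδ.le
    rw [Finset.coe_range, mem_Iio, ← Nat.add_one_le_iff, ← Nat.floor_add_one ha0]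
    exact Nat.floor_le_floor hle
  have hinj : InjOn (fun a => ⌊a / δ⌋₊) S := by
    intro a ha b hb hab
    by_contra hne
    have hcast : (⌊a / δ⌋₊ : ℝ) = ⌊b / δ⌋₊ := congrArg Nat.cast hab
    have hdist : |a / δ - b / δ| < 1 := by
      rw [abs_sub_lt_iff]
      constructor <;> linarith [Nat.lt_floor_add_one (a / δ), Nat.lt_floor_add_one (b / δ),
        Nat.floor_le (div_nonneg (hS ha).1 hδ.le), Nat.floor_le (div_nonneg (hS hb).1 hδ.le)]
    rw [← sub_div, abs_div, abs_of_pos hδ, div_lt_one hδ] at hdist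
    exact (hsep ha hb hne).not_gt hdist
  calc S.encard ≤ (Finset.range ⌊δ⁻¹⌋₊ : Set ℕ).encard := encard_le_encard_of_injOn hmaps hinj
    _ = ⌊δ⁻¹⌋₊ := by rw [encard_coe_eq_coe_finsetCard, Finset.card_range]

variable {β : ℝ}

lemma encard_fullEndpoints_le (hβ : 0 < β) (n : ℕ) :
    (fullEndpoints β n).encard ≤ ⌊β ^ n⌋₊ := by
  simpa using encard_le_floor_of_pairwise_le_abs_sub (by positivity : 0 < (β ^ n)⁻¹)
    (fullEndpoints_subset_Icc hβ) (pairwise_inv_pow_le_abs_sub_fullEndpoints hβ)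

lemma finite_fullEndpoints (hβ : 0 < β) (n : ℕ) : (fullEndpoints β n).Finite :=
  finite_of_encard_le_coe (encard_fullEndpoints_le hβ n)

lemma ncard_fullEndpoints_le (hβ : 0 < β) (n : ℕ) : ((fullEndpoints β n).ncard : ℝ) ≤ β ^ n :=
  calc ((fullEndpoints β n).ncard : ℝ) ≤ ⌊β ^ n⌋₊ := by
        rw [Nat.cast_le, ← ENat.natCast_le_natCast, (finite_fullEndpoints hβ n).cast_ncard_eq]
        exact encard_fullEndpoints_le hβ n
    _ ≤ β ^ n := Nat.floor_le (by positivity)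

/-- The cylinder of order `m + k` around `x` is a full cylinder of order `m` followed by the first
`k` digits of the expansion of `1`; in particular its image under `Tb β ^ (m + k)` is
`[0, Tb β ^ k 1)`. -/
structure PrefixDecomposition (β x : ℝ) (m k : ℕ) : Prop where
  endpoint_mem : conv β x (m + k) - conv β 1 k / β ^ m ∈ fullEndpoints β m
  iterate_lt : (Tb β)^[m + k] x < (Tb β)^[k] 1
  isBranch : IsBranch β (m + k) (conv β x (m + k)) ((Tb β)^[k] 1)

lemma PrefixDecomposition.of_conv_mem_fullEndpoints {x : ℝ} (hx : x ∈ Ico 0 1) {n : ℕ}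
    (h : conv β x n ∈ fullEndpoints β n) : PrefixDecomposition β x n 0 where
  endpoint_mem := by simpa [conv] using h
  iterate_lt := (iterate_Tb_mem_Ico β hx n).2
  isBranch := h

lemma dig_eq_of_iterate_lt {x z : ℝ} {n k : ℕ} (hβ : 0 < β)
    (hlt : (Tb β)^[n] x < (Tb β)^[k] z) (hz : β * (Tb β)^[k] z < dig β x n + 1) :
    dig β z k = dig β x n :=
  Int.floor_eq_iff.2 ⟨(Int.floor_le _).trans (mul_lt_mul_of_pos_left hlt hβ).le, hz⟩

/-- Either the next digit of `x` is smaller than the next digit of `1`, and the cylinder becomes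
full, or both digits agree. -/
lemma PrefixDecomposition.step {x : ℝ} (hβ : 0 < β) (hx : x ∈ Ico 0 1) {m k : ℕ}
    (h : PrefixDecomposition β x m k) :
    PrefixDecomposition β x (m + k + 1) 0 ∨ PrefixDecomposition β x m (k + 1) := by
  have hdig := dig_nonneg hβ.le hx (m + k)
  by_cases hfull : (dig β x (m + k) : ℝ) + 1 ≤ β * (Tb β)^[k] 1
  · left
    refine .of_conv_mem_fullEndpoints hx ?_
    rw [conv_succ]
    exact h.isBranch.step hβ hdig le_rfl hfull
  · right
    have heq : dig β 1 k = dig β x (m + k) := dig_eq_of_iterate_lt hβ h.iterate_lt (not_le.1 hfull)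
    have hone : (Tb β)^[k + 1] 1 ≤ 1 := by
      rw [Function.iterate_succ_apply']
      exact (Int.fract_lt_one _).le
    refine ⟨?_, ?_, ?_⟩
    · convert h.endpoint_mem using 1
      rw [← add_assoc, conv_succ, conv_succ, heq]
      field_simp
      ring
    · rw [← add_assoc, iterate_Tb_succ, iterate_Tb_succ, heq]
      exact sub_lt_sub_right (mul_lt_mul_of_pos_left h.iterate_lt hβ) _
    · rw [← add_assoc, conv_succ]
      refine h.isBranch.step hβ hdig hone ?_
      rw [iterate_Tb_succ, heq, add_sub_cancel]

lemma exists_prefixDecomposition {x : ℝ} (hβ : 1 < β) (hx : x ∈ Ico 0 1) (n : ℕ) :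
    ∃ m k, m + k = n ∧ PrefixDecomposition β x m k := by
  induction n with
  | zero => exact ⟨0, 0, rfl, .of_conv_mem_fullEndpoints hx (zero_mem_fullEndpoints hβ 0)⟩
  | succ n ih =>
    obtain ⟨m, k, rfl, h⟩ := ih
    rcases h.step (zero_lt_one.trans hβ) hx with h | h
    · exact ⟨_, 0, rfl, h⟩
    · exact ⟨m, k + 1, rfl, h⟩

/-- The set of all `n`-th convergents of points of `[0, 1)`. -/
def convergents (β : ℝ) (n : ℕ) : Set ℝ := (fun x => conv β x n) '' Ico 0 1

lemma exists_finset_convergents_subset (hβ : 1 < β) (n : ℕ) :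
    ∃ G : Finset ℝ, convergents β n ⊆ G ∧ G.card ≤ (n + 1) * (fullEndpoints β n).ncard := by
  classical
  have hfin := finite_fullEndpoints (zero_lt_one.trans hβ)
  refine ⟨(Finset.range (n + 1)).biUnion fun m =>
    (hfin m).toFinset.image fun a => a + conv β 1 (n - m) / β ^ m, ?_, ?_⟩
  · rintro _ ⟨x, hx, rfl⟩
    obtain ⟨m, k, rfl, h⟩ := exists_prefixDecomposition hβ hx n
    simp only [Finset.coe_biUnion, Finset.coe_image, Finite.coe_toFinset, mem_iUnion]
    refine ⟨m, Finset.mem_coe.2 (Finset.mem_range.2 (by omega)), _, h.endpoint_mem, ?_⟩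
    rw [Nat.add_sub_cancel_left]
    exact sub_add_cancel _ _
  · refine (Finset.card_biUnion_le_card_mul _ _ (fullEndpoints β n).ncard fun m hm => ?_).trans
      (by rw [Finset.card_range])
    calc _ ≤ (hfin m).toFinset.card := Finset.card_image_le
      _ = (fullEndpoints β m).ncard := (ncard_eq_toFinset_card _ (hfin m)).symm
      _ ≤ (fullEndpoints β n).ncard := ncard_le_ncard
          (fullEndpoints_mono hβ (Nat.lt_succ_iff.1 (Finset.mem_range.1 hm))) (hfin n)

lemma finite_convergents (hβ : 1 < β) (n : ℕ) : (convergents β n).Finite :=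
  let ⟨G, hG, _⟩ := exists_finset_convergents_subset hβ n
  G.finite_toSet.subset hG

lemma ncard_convergents_le (hβ : 1 < β) (n : ℕ) :
    (convergents β n).ncard ≤ (n + 1) * (fullEndpoints β n).ncard := by
  obtain ⟨G, hG, hcard⟩ := exists_finset_convergents_subset hβ n
  exact (ncard_le_ncard hG G.finite_toSet).trans (by rwa [ncard_coe_finset])

lemma pow_le_ncard_convergents (hβ : 1 < β) (n : ℕ) : β ^ n ≤ (convergents β n).ncard := by
  have hβ0 := zero_lt_one.trans hβ
  let G := (finite_convergents hβ n).toFinset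
  have hcover : Ico (0 : ℝ) 1 ⊆ ⋃ a ∈ G, Icc a (a + (β ^ n)⁻¹) := by
    intro x hx
    obtain ⟨h0, h1⟩ := iterate_Tb_mem_Ico β hx n
    have hsub := sub_conv hβ0.ne' x n
    have hlow : 0 ≤ (Tb β)^[n] x / β ^ n := by positivity
    have hupp : (Tb β)^[n] x / β ^ n ≤ (β ^ n)⁻¹ := by
      rw [div_eq_mul_inv]
      exact mul_le_of_le_one_left (by positivity) h1.le
    exact mem_biUnion (x := conv β x n) ((finite_convergents hβ n).mem_toFinset.2 ⟨x, hx, rfl⟩)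
      ⟨by linarith, by linarith⟩
  have hvol : (1 : ENNReal) ≤ ENNReal.ofReal (G.card * (β ^ n)⁻¹) :=
    calc (1 : ENNReal) = volume (Ico (0 : ℝ) 1) := by simp
      _ ≤ ∑ a ∈ G, volume (Icc a (a + (β ^ n)⁻¹)) :=
        (measure_mono hcover).trans (measure_biUnion_finset_le _ _)
      _ = ENNReal.ofReal (G.card * (β ^ n)⁻¹) := by
        simp [ENNReal.ofReal_mul]
  rw [ENNReal.one_le_ofReal, ← div_eq_mul_inv, one_le_div (by positivity)] at hvol
  rwa [ncard_eq_toFinset_card _ (finite_convergents hβ n)]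

lemma pow_le_mul_ncard_fullEndpoints (hβ : 1 < β) (n : ℕ) :
    β ^ n ≤ (n + 1) * (fullEndpoints β n).ncard :=
  (pow_le_ncard_convergents hβ n).trans (by exact_mod_cast ncard_convergents_le hβ n)

lemma eventually_rpow_add_one_le_ncard_fullEndpoints (hβ : 1 < β) {σ : ℝ} (hσ0 : 0 ≤ σ)
    (hσ : σ < 1) : ∀ᶠ n : ℕ in atTop, β ^ (σ * n) + 1 ≤ (fullEndpoints β n).ncard := by
  have hβ0 := zero_lt_one.trans hβ
  have hρ1 : β ^ (σ - 1) < 1 := Real.rpow_lt_one_of_one_lt_of_neg hβ (by linarith)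
  have hlim : Tendsto (fun n : ℕ => 2 * (n * (β ^ (σ - 1)) ^ n + (β ^ (σ - 1)) ^ n)) atTop
      (nhds (2 * (0 + 0))) :=
    ((tendsto_self_mul_const_pow_of_lt_one (by positivity) hρ1).add
      (tendsto_pow_atTop_nhds_zero_of_lt_one (by positivity) hρ1)).const_mul 2
  filter_upwards [hlim.eventually_lt_const (by norm_num : (2 * (0 + 0) : ℝ) < 1)] with n hn
  have hratio : (β ^ (σ - 1)) ^ n * β ^ n = β ^ (σ * n) := by
    rw [← Real.rpow_natCast, ← Real.rpow_natCast, ← Real.rpow_mul hβ0.le, ← Real.rpow_add hβ0]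
    ring_nf
  have hone : 1 ≤ β ^ (σ * n) := Real.one_le_rpow hβ.le (by positivity)
  refine le_of_mul_le_mul_left ?_ (by positivity : (0 : ℝ) < n + 1)
  calc (n + 1) * (β ^ (σ * n) + 1) ≤ (n + 1) * (2 * β ^ (σ * n)) := by gcongr; linarith
    _ = 2 * (n * (β ^ (σ - 1)) ^ n + (β ^ (σ - 1)) ^ n) * β ^ n := by rw [← hratio]; ring
    _ ≤ 1 * β ^ n := by gcongr
    _ ≤ (n + 1) * (fullEndpoints β n).ncard := by
      rw [one_mul]
      exact pow_le_mul_ncard_fullEndpoints hβ n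

end Counting

section UpperBound

variable {β : ℝ}

lemma tsum_convergents_ediam_closedBall_rpow_le (hβ : 1 < β) {θ s : ℝ} (hs : 0 ≤ s) (n : ℕ) :
    ∑' c : convergents β n, Metric.ediam (Metric.closedBall (c : ℝ) (β ^ (-(θ * n)))) ^ s ≤
      ENNReal.ofReal (2 ^ s * ((n + 1) * (β ^ (1 - θ * s)) ^ n)) := by
  have hβ0 := zero_lt_one.trans hβ
  have hcard : ((convergents β n).ncard : ℝ) ≤ (n + 1) * β ^ n :=
    calc ((convergents β n).ncard : ℝ) ≤ (n + 1) * (fullEndpoints β n).ncard := by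
          exact_mod_cast ncard_convergents_le hβ n
      _ ≤ (n + 1) * β ^ n := by gcongr; exact ncard_fullEndpoints_le hβ0 n
  have hpow : β ^ n * β ^ (-(θ * n) * s) = (β ^ (1 - θ * s)) ^ n := by
    rw [← Real.rpow_natCast, ← Real.rpow_natCast, ← Real.rpow_mul hβ0.le, ← Real.rpow_add hβ0]
    ring_nf
  have hball : ∀ c : convergents β n,
      Metric.ediam (Metric.closedBall (c : ℝ) (β ^ (-(θ * n)))) ^ s =
        ENNReal.ofReal (2 ^ s * β ^ (-(θ * n) * s)) := fun c => by
    rw [Real.closedBall_eq_Icc, Real.ediam_Icc, add_sub_sub_cancel, ← two_mul,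
      ENNReal.ofReal_rpow_of_nonneg (by positivity) hs,
      Real.mul_rpow (by norm_num) (by positivity), ← Real.rpow_mul hβ0.le]
  simp only [hball]
  rw [ENNReal.tsum_const, ENat.card_coe_set_eq, ← (finite_convergents hβ n).cast_ncard_eq,
    ENat.toENNReal_coe, ← ENNReal.ofReal_natCast, ← ENNReal.ofReal_mul (by positivity)]
  refine ENNReal.ofReal_le_ofReal ?_
  calc ((convergents β n).ncard : ℝ) * (2 ^ s * β ^ (-(θ * n) * s))
      ≤ (n + 1) * β ^ n * (2 ^ s * β ^ (-(θ * n) * s)) := by gcongr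
    _ = 2 ^ s * ((n + 1) * (β ^ (1 - θ * s)) ^ n) := by rw [← hpow]; ring

lemma tsum_sigma_convergents_ediam_closedBall_rpow_ne_top (hβ : 1 < β) {θ s : ℝ} (hs : 0 ≤ s)
    (hθs : 1 < θ * s) :
    ∑' i : Σ n, convergents β n,
      Metric.ediam (Metric.closedBall (i.2 : ℝ) (β ^ (-(θ * i.1)))) ^ s ≠ ⊤ := by
  have : 0 < β := zero_lt_one.trans hβ
  have hρ1 : β ^ (1 - θ * s) < 1 := Real.rpow_lt_one_of_one_lt_of_neg hβ (by linarith)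
  have hρ0 : 0 < β ^ (1 - θ * s) := by positivity
  have hsummable : Summable fun n : ℕ => 2 ^ s * ((n + 1 : ℝ) * (β ^ (1 - θ * s)) ^ n) := by
    simp only [add_one_mul]
    refine (Summable.add ?_ (summable_geometric_of_lt_one hρ0.le hρ1)).mul_left _
    simpa using summable_pow_mul_geometric_of_norm_lt_one 1
      (by rwa [Real.norm_of_nonneg hρ0.le] : ‖β ^ (1 - θ * s)‖ < 1)
  rw [ENNReal.tsum_sigma']
  exact ne_top_of_le_ne_top hsummable.tsum_ofReal_ne_top
    (ENNReal.tsum_le_tsum (tsum_convergents_ediam_closedBall_rpow_le hβ hs))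

lemma hausdorffMeasure_frequently_abs_sub_conv_le (hβ : 1 < β) {θ s : ℝ} (hs : 0 < s)
    (hθs : 1 < θ * s) :
    μH[s] {x ∈ Ico (0 : ℝ) 1 | ∃ᶠ n : ℕ in atTop, |x - conv β x n| ≤ β ^ (-(θ * n))} = 0 := by
  have : ∀ n, Countable (convergents β n) := fun n => (finite_convergents hβ n).countable.to_subtype
  refine measure_mono_null ?_ (hausdorffMeasure_frequently_mem_eq_zero hs
    (tsum_sigma_convergents_ediam_closedBall_rpow_ne_top hβ hs.le hθs))
  rintro x ⟨hx, hfreq⟩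
  let convergent : ℕ → Σ n, convergents β n := fun n => ⟨n, conv β x n, x, hx, rfl⟩
  have hinj : Function.Injective convergent := fun m n hmn => congrArg Sigma.fst hmn
  rw [← Nat.cofinite_eq_atTop] at hfreq
  exact hinj.tendsto_cofinite.frequently hfreq

lemma dimH_frequently_abs_sub_conv_le (hβ : 1 < β) {θ : ℝ} (hθ : 0 < θ) :
    dimH {x ∈ Ico (0 : ℝ) 1 | ∃ᶠ n : ℕ in atTop, |x - conv β x n| ≤ β ^ (-(θ * n))} ≤
      ENNReal.ofReal (1 / θ) := by
  refine le_of_forall_gt_imp_ge_of_dense fun c hc => ?_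
  obtain ⟨s, hθs, hsc⟩ := ENNReal.lt_iff_exists_nnreal_btwn.1 hc
  have hs : 1 / θ < s := (ENNReal.ofReal_lt_coe_iff (by positivity)).1 hθs
  have hs0 : (0 : ℝ) < s := (by positivity : 0 < 1 / θ).trans hs
  rw [div_lt_iff₀' hθ] at hs
  refine (dimH_le_of_hausdorffMeasure_ne_top (d := s) ?_).trans hsc.le
  rw [hausdorffMeasure_frequently_abs_sub_conv_le hβ hs0 hs]
  exact ENNReal.zero_ne_top

/-- The points of `[0, 1]` whose convergents approximate them at the exact rate `β ^ (-φ n)`, in the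
sense of the theorem: infinitely often, and up to factors `1 + o(1)` in the exponent. -/
def exactRateSet (β : ℝ) (φ : ℕ → ℝ) : Set ℝ :=
  {x ∈ Icc 0 1 | liminf (fun n => Real.logb β |x - conv β x n| / φ n) atTop = -1}

variable {φ : ℕ → ℝ} {η : ℝ}

lemma frequently_abs_sub_conv_le_of_mem_exactRateSet (hβ : 1 < β)
    (hη : liminf (fun n : ℕ => φ n / n) atTop = η) {θ x : ℝ} (hθ0 : 0 < θ) (hθ : θ < η)
    (hx : x ∈ exactRateSet β φ) : ∃ᶠ n : ℕ in atTop, |x - conv β x n| ≤ β ^ (-(θ * n)) := by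
  obtain ⟨κ, hθκ, hκ⟩ := exists_between hθ
  have hκ0 := hθ0.trans hθκ
  have hlog : ∃ᶠ n in atTop, Real.logb β |x - conv β x n| / φ n < -(θ / κ) := by
    refine frequently_lt_of_liminf_lt
      (isCoboundedUnder_ge_of_liminf_ne_zero (by rw [hx.2]; norm_num)) ?_
    rwa [hx.2, neg_lt_neg_iff, div_lt_one hκ0]
  refine (hlog.and_eventually
    (eventually_mul_lt_of_liminf_div hη (hθ0.trans hθ).ne' hκ)).mono fun n ⟨hlog, hφ⟩ => ?_
  have hφ0 : 0 < φ n := (by positivity : 0 ≤ κ * (n : ℝ)).trans_lt hφ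
  rw [div_lt_iff₀ hφ0] at hlog
  have hle : Real.logb β |x - conv β x n| ≤ -(θ * n) :=
    calc Real.logb β |x - conv β x n| ≤ -(θ / κ * φ n) := by linarith
      _ ≤ -(θ / κ * (κ * n)) := by gcongr
      _ = -(θ * n) := by field_simp
  rcases (abs_nonneg (x - conv β x n)).eq_or_lt with h0 | hpos
  · rw [← h0]
    positivity
  · exact (Real.logb_le_iff_le_rpow hβ hpos).1 hle

lemma dimH_exactRateSet_le (hβ : 1 < β) (hη : liminf (fun n : ℕ => φ n / n) atTop = η)
    (hη0 : 0 < η) : dimH (exactRateSet β φ) ≤ ENNReal.ofReal (1 / η) := by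
  have hle : ∀ θ, 0 < θ → θ < η → dimH (exactRateSet β φ) ≤ ENNReal.ofReal (1 / θ) := by
    intro θ hθ0 hθ
    have hsub : exactRateSet β φ ⊆
        {x ∈ Ico 0 1 | ∃ᶠ n : ℕ in atTop, |x - conv β x n| ≤ β ^ (-(θ * n))} ∪ {1} := by
      intro x hx
      rcases hx.1.2.eq_or_lt with rfl | hx1
      · exact .inr rfl
      · exact .inl ⟨⟨hx.1.1, hx1⟩, frequently_abs_sub_conv_le_of_mem_exactRateSet hβ hη hθ0 hθ hx⟩
    refine (dimH_mono hsub).trans ?_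
    rw [dimH_union, dimH_singleton, max_eq_left (by simp)]
    exact dimH_frequently_abs_sub_conv_le hβ hθ0
  have hcont : ContinuousAt (fun θ : ℝ => ENNReal.ofReal (1 / θ)) η :=
    ENNReal.continuous_ofReal.continuousAt.comp
      (continuousAt_const.div continuousAt_id hη0.ne')
  refine ge_of_tendsto (hcont.tendsto.mono_left (nhdsWithin_le_nhds (s := Iio η))) ?_
  filter_upwards [Ioo_mem_nhdsLT hη0] with θ hθ using hle θ hθ.1 hθ.2

end UpperBound

section TailSum

/-- The number in `[0, 1]` coded by the shifted block sequence `y i, y (i + 1), …` in base `B`. A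
block is scaled so as to be a number in `[0, 1 - B⁻¹]` instead of a digit in `[0, B - 1]`. -/
noncomputable def tailSum (B : ℝ) (y : ℕ → ℝ) (i : ℕ) : ℝ := ∑' l, y (i + l) * B⁻¹ ^ l

variable {B : ℝ} {y : ℕ → ℝ}

lemma hasSum_one_sub_inv_mul_inv_pow (hB : 1 < B) :
    HasSum (fun l : ℕ => (1 - B⁻¹) * B⁻¹ ^ l) 1 := by
  have hB1 := inv_lt_one_of_one_lt₀ hB
  simpa [mul_inv_cancel₀ (sub_ne_zero.2 hB1.ne')] using
    (hasSum_geometric_of_lt_one (inv_nonneg.2 (by linarith)) hB1).mul_left (1 - B⁻¹)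

lemma summable_tailSum (hB : 1 < B) (hy : ∀ i, y i ∈ Icc 0 (1 - B⁻¹)) (i : ℕ) :
    Summable fun l => y (i + l) * B⁻¹ ^ l := by
  have : 0 < B := zero_lt_one.trans hB
  refine .of_nonneg_of_le (fun l => mul_nonneg (hy _).1 (by positivity)) (fun l => ?_)
    (hasSum_one_sub_inv_mul_inv_pow hB).summable
  exact mul_le_mul_of_nonneg_right (hy _).2 (by positivity)

lemma tailSum_nonneg (hB : 0 ≤ B) (hy : ∀ i, 0 ≤ y i) (i : ℕ) : 0 ≤ tailSum B y i :=
  tsum_nonneg fun l => mul_nonneg (hy _) (by positivity)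

lemma tailSum_le_one (hB : 1 < B) (hy : ∀ i, y i ∈ Icc 0 (1 - B⁻¹)) (i : ℕ) :
    tailSum B y i ≤ 1 := by
  have : 0 < B := zero_lt_one.trans hB
  rw [← (hasSum_one_sub_inv_mul_inv_pow hB).tsum_eq]
  exact (summable_tailSum hB hy i).tsum_le_tsum
    (fun l => mul_le_mul_of_nonneg_right (hy _).2 (by positivity))
    (hasSum_one_sub_inv_mul_inv_pow hB).summable

lemma tailSum_eq_sum_add (hB : 1 < B) (hy : ∀ i, y i ∈ Icc 0 (1 - B⁻¹)) (i d : ℕ) :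
    tailSum B y i = ∑ l ∈ Finset.range d, y (i + l) * B⁻¹ ^ l + tailSum B y (i + d) / B ^ d := by
  rw [tailSum, ← (summable_tailSum hB hy i).sum_add_tsum_nat_add d, tailSum, ← tsum_div_const]
  refine congrArg _ (tsum_congr fun l => ?_)
  rw [pow_add, inv_pow B d, add_comm l d, add_assoc, div_eq_mul_inv, mul_assoc]

lemma tailSum_eq_add_div (hB : 1 < B) (hy : ∀ i, y i ∈ Icc 0 (1 - B⁻¹)) (i : ℕ) :
    tailSum B y i = y i + tailSum B y (i + 1) / B := by
  simpa using tailSum_eq_sum_add hB hy i 1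

lemma tailSum_eq_div_pow_of_eq_zero (hB : 1 < B) (hy : ∀ i, y i ∈ Icc 0 (1 - B⁻¹)) {i d : ℕ}
    (hzero : ∀ l < d, y (i + l) = 0) : tailSum B y i = tailSum B y (i + d) / B ^ d := by
  rw [tailSum_eq_sum_add hB hy i d, Finset.sum_eq_zero, zero_add]
  intro l hl
  rw [hzero l (Finset.mem_range.1 hl), zero_mul]

lemma tailSum_lt_one (hB : 1 < B) (hy : ∀ i, y i ∈ Icc 0 (1 - B⁻¹))
    (hfreq : ∃ᶠ i in atTop, y i = 0) (i : ℕ) : tailSum B y i < 1 := by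
  have : 0 < B := zero_lt_one.trans hB
  obtain ⟨j, hij, hj⟩ := frequently_atTop.1 hfreq i
  obtain ⟨l, rfl⟩ := Nat.exists_eq_add_of_le hij
  rw [← (hasSum_one_sub_inv_mul_inv_pow hB).tsum_eq]
  refine Summable.tsum_lt_tsum (i := l)
    (fun l => mul_le_mul_of_nonneg_right (hy _).2 (by positivity)) ?_
    (summable_tailSum hB hy i) (hasSum_one_sub_inv_mul_inv_pow hB).summable
  rw [hj, zero_mul]
  exact mul_pos (sub_pos.2 (inv_lt_one_of_one_lt₀ hB)) (by positivity)

lemma tailSum_mem_Ico {β : ℝ} (hβ : 1 < β) {N : ℕ} (hN : N ≠ 0)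
    (hy : ∀ i, y i ∈ fullEndpoints β N) (hfreq : ∃ᶠ i in atTop, y i = 0) (i : ℕ) :
    tailSum (β ^ N) y i ∈ Ico 0 1 := by
  have hβ0 := zero_lt_one.trans hβ
  have hy01 : ∀ i, y i ∈ Icc 0 (1 - (β ^ N)⁻¹) := fun i => fullEndpoints_subset_Icc hβ0 (hy i)
  exact ⟨tailSum_nonneg (by positivity) (fun i => (hy01 i).1) i,
    tailSum_lt_one (one_lt_pow₀ hβ hN) hy01 hfreq i⟩

lemma iterate_tailSum {β : ℝ} (hβ : 1 < β) {N : ℕ} (hN : N ≠ 0)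
    (hy : ∀ i, y i ∈ fullEndpoints β N) (hfreq : ∃ᶠ i in atTop, y i = 0) (i : ℕ) :
    (Tb β)^[N * i] (tailSum (β ^ N) y 0) = tailSum (β ^ N) y i := by
  have hβ0 := zero_lt_one.trans hβ
  have hB : 1 < β ^ N := one_lt_pow₀ hβ hN
  have hy01 : ∀ i, y i ∈ Icc 0 (1 - (β ^ N)⁻¹) := fun i => fullEndpoints_subset_Icc hβ0 (hy i)
  induction i with
  | zero => rfl
  | succ i ih =>
    rw [Nat.mul_succ, Nat.add_comm, Function.iterate_add_apply, ih, tailSum_eq_add_div hB hy01]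
    exact (hy i _ (tailSum_mem_Ico hβ hN hy hfreq _)).2

end TailSum

section Separation

variable {B : ℝ}

lemma inv_pow_succ_le_tailSum {y : ℕ → ℝ} (hB : 1 < B) (hy : ∀ i, y i ∈ Icc 0 (1 - B⁻¹)) {i l : ℕ}
    (hl : B⁻¹ ≤ y (i + l)) : (B ^ (l + 1))⁻¹ ≤ tailSum B y i := by
  have : 0 < B := zero_lt_one.trans hB
  calc (B ^ (l + 1))⁻¹ = B⁻¹ * B⁻¹ ^ l := by rw [← inv_pow, pow_succ']
    _ ≤ y (i + l) * B⁻¹ ^ l := by gcongr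
    _ ≤ tailSum B y i := (summable_tailSum hB hy i).le_tsum l fun k _ =>
      mul_nonneg (hy _).1 (by positivity)

/-- The first difference alone could be compensated by the tails; the margin comes from the
nonzero block `z m'`. -/
lemma inv_pow_succ_le_tailSum_sub {y z : ℕ → ℝ} (hB : 1 < B)
    (hy : ∀ i, y i ∈ Icc 0 (1 - B⁻¹)) (hz : ∀ i, z i ∈ Icc 0 (1 - B⁻¹)) {m m' : ℕ}
    (heq : ∀ i < m, y i = z i) (hm : B⁻¹ ≤ z m - y m) (hmm' : m < m') (hm' : B⁻¹ ≤ z m') :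
    (B ^ (m' + 1))⁻¹ ≤ tailSum B z 0 - tailSum B y 0 := by
  have hB0 := zero_lt_one.trans hB
  obtain ⟨d, rfl⟩ := Nat.exists_eq_add_of_lt hmm'
  have hprefix : tailSum B z 0 - tailSum B y 0 = (tailSum B z m - tailSum B y m) / B ^ m := by
    have hsum : ∑ l ∈ Finset.range m, y (0 + l) * B⁻¹ ^ l =
        ∑ l ∈ Finset.range m, z (0 + l) * B⁻¹ ^ l :=
      Finset.sum_congr rfl fun l hl => by rw [zero_add, heq l (Finset.mem_range.1 hl)]
    rw [tailSum_eq_sum_add hB hz 0 m, tailSum_eq_sum_add hB hy 0 m, hsum, zero_add]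
    ring
  have htail : (B ^ (d + 1))⁻¹ ≤ tailSum B z (m + 1) :=
    inv_pow_succ_le_tailSum hB hz (by rwa [add_right_comm])
  have hdiff : (B ^ (d + 1))⁻¹ * B⁻¹ ≤ tailSum B z m - tailSum B y m :=
    calc (B ^ (d + 1))⁻¹ * B⁻¹ ≤ tailSum B z (m + 1) * B⁻¹ := by gcongr
      _ ≤ B⁻¹ + (tailSum B z (m + 1) - tailSum B y (m + 1)) * B⁻¹ := by
        linarith [mul_le_of_le_one_left (inv_nonneg.2 hB0.le) (tailSum_le_one hB hy (m + 1))]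
      _ ≤ tailSum B z m - tailSum B y m := by
        rw [tailSum_eq_add_div hB hz m, tailSum_eq_add_div hB hy m, div_eq_mul_inv, div_eq_mul_inv]
        linarith
  calc (B ^ (m + d + 1 + 1))⁻¹ = (B ^ (d + 1))⁻¹ * B⁻¹ / B ^ m := by field_simp; ring
    _ ≤ (tailSum B z m - tailSum B y m) / B ^ m := by gcongr
    _ = tailSum B z 0 - tailSum B y 0 := hprefix.symm

variable {P : ℕ → Prop} [DecidablePred P] {κ : Type*}

/-- The block sequence carrying `e (a 0), e (a 1), …` at the successive positions satisfying `P`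
and `0` at all other positions. -/
def spread (P : ℕ → Prop) [DecidablePred P] (e : κ → ℝ) (a : ℕ → κ) (i : ℕ) : ℝ :=
  if P i then e (a (Nat.count P i)) else 0

lemma spread_nth (hP : {i | P i}.Infinite) (e : κ → ℝ) (a : ℕ → κ) (j : ℕ) :
    spread P e a (Nat.nth P j) = e (a j) := by
  rw [spread, if_pos (Nat.nth_mem_of_infinite hP j), Nat.count_nth_of_infinite hP]

lemma spread_mem {e : κ → ℝ} {S : Set ℝ} (h0 : 0 ∈ S) (he : ∀ c, e c ∈ S) (a : ℕ → κ) (i : ℕ) :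
    spread P e a i ∈ S := by
  rw [spread]
  split_ifs
  exacts [he _, h0]

lemma spread_eq_spread_of_lt_nth (hP : {i | P i}.Infinite) (e : κ → ℝ) {a b : ℕ → κ}
    {j : ℕ} (hab : ∀ i < j, a i = b i) {i : ℕ} (hi : i < Nat.nth P j) :
    spread P e a i = spread P e b i := by
  rw [spread, spread]
  split_ifs with hPi
  · have hcount : Nat.count P i < j := by
      simpa only [Nat.count_nth_of_infinite hP] using Nat.count_strict_mono hPi hi
    rw [hab _ hcount]
  · rfl

lemma inv_pow_le_dist_tailSum_spread (hB : 1 < B) {e : κ → ℝ} (he : ∀ c, e c ∈ Icc B⁻¹ (1 - B⁻¹))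
    (hsep : Pairwise fun c d => B⁻¹ ≤ |e c - e d|) (hP : {i | P i}.Infinite) {a b : ℕ → κ}
    (hab : a ≠ b) :
    (B ^ (Nat.nth P (PiNat.firstDiff a b + 1) + 1))⁻¹ ≤
      dist (tailSum B (spread P e a) 0) (tailSum B (spread P e b) 0) := by
  have hB0 : 0 ≤ B⁻¹ := inv_nonneg.2 (by linarith)
  have hB1 : B⁻¹ ≤ 1 := inv_le_one_of_one_le₀ hB.le
  have hy : ∀ a i, spread P e a i ∈ Icc 0 (1 - B⁻¹) := fun a =>
    spread_mem (S := Icc 0 (1 - B⁻¹)) ⟨le_rfl, by linarith⟩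
      (fun c => ⟨hB0.trans (he c).1, (he c).2⟩) a
  set j := PiNat.firstDiff a b
  have hlt : Nat.nth P j < Nat.nth P (j + 1) := Nat.nth_strictMono hP j.lt_succ_self
  have hprefix : ∀ i < j, a i = b i := fun i => PiNat.apply_eq_of_lt_firstDiff
  rcases le_abs.1 (hsep (PiNat.apply_firstDiff_ne hab)) with h | h
  · refine (inv_pow_succ_le_tailSum_sub hB (hy b) (hy a) (fun i => ?_) ?_ hlt ?_).trans
      (le_abs_self _)
    · exact spread_eq_spread_of_lt_nth hP e fun i hi => (hprefix i hi).symm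
    · rwa [spread_nth hP, spread_nth hP]
    · exact (spread_nth hP e a _).symm ▸ (he _).1
  · rw [dist_comm]
    refine (inv_pow_succ_le_tailSum_sub hB (hy a) (hy b) (fun i => ?_) ?_ hlt ?_).trans
      (le_abs_self _)
    · exact spread_eq_spread_of_lt_nth hP e hprefix
    · rwa [spread_nth hP, spread_nth hP, ← neg_sub]
    · exact (spread_nth hP e b _).symm ▸ (he _).1

lemma infinite_setOf_of_le_mul_count {A : ℝ} (hA : ∀ m : ℕ, m ≤ A * Nat.count P m) :
    {i | P i}.Infinite := by
  intro hfin
  obtain ⟨m, hm⟩ := exists_nat_gt (|A| * hfin.toFinset.card)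
  refine hm.not_ge ((hA m).trans ?_)
  gcongr
  · exact le_abs_self A
  · exact Nat.count_le_card hfin m

lemma le_dimH_range_tailSum_spread (hB : 1 < B) {M : ℕ} (hM : 1 < M) {e : Fin M → ℝ}
    (he : ∀ c, e c ∈ Icc B⁻¹ (1 - B⁻¹)) (hsep : Pairwise fun c d => B⁻¹ ≤ |e c - e d|) {A : ℝ}
    (hA : ∀ m : ℕ, m ≤ A * Nat.count P m) {r : NNReal} (hr : 0 < r) (hrM : B ^ (r * A) ≤ M) :
    (r : ENNReal) ≤ dimH (range fun a : ℕ → Fin M => tailSum B (spread P e a) 0) := by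
  have hP := infinite_setOf_of_le_mul_count hA
  have hB0 := zero_lt_one.trans hB
  refine le_dimH_range_of_inv_pow_firstDiff_le hM hr (C := (M : NNReal) ^ 2) fun a b hab => ?_
  set j := PiNat.firstDiff a b
  set m := Nat.nth P (j + 1) + 1 with hm
  have hcount : (m : ℝ) ≤ A * (j + 2 : ℕ) := by
    simpa only [hm, Nat.count_nth_succ_of_infinite hP] using hA m
  have hpow : B ^ (m * r : ℝ) ≤ (M : ℝ) ^ (j + 2) :=
    calc B ^ (m * r : ℝ) ≤ B ^ (r * A * (j + 2 : ℕ)) :=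
          Real.rpow_le_rpow_of_exponent_le hB.le (by
            linarith [mul_le_mul_of_nonneg_right hcount r.coe_nonneg])
      _ = (B ^ (r * A)) ^ (j + 2) := by rw [Real.rpow_mul hB0.le, Real.rpow_natCast]
      _ ≤ (M : ℝ) ^ (j + 2) := by gcongr
  have : (0 : ℝ) < M := by positivity
  calc ((M : ℝ) ^ j)⁻¹ = M ^ 2 * ((M : ℝ) ^ (j + 2))⁻¹ := by field_simp; ring
    _ ≤ M ^ 2 * (B ^ (m * r : ℝ))⁻¹ := by gcongr
    _ = M ^ 2 * ((B ^ m)⁻¹) ^ (r : ℝ) := by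
      rw [Real.inv_rpow (by positivity), ← Real.rpow_natCast B m, ← Real.rpow_mul hB0.le]
    _ ≤ _ := by
      push_cast
      gcongr
      exact inv_pow_le_dist_tailSum_spread hB he hsep hP hab

end Separation

section ZeroRuns

/-- The position `i` is free, that is, it lies in none of the runs `[p k, q k)`. -/
def IsFree (p q : ℕ → ℕ) (i : ℕ) : Prop := ∀ k, i ∉ Ico (p k) (q k)

variable {p q : ℕ → ℕ}

lemma isFree_of_lt (hpq : ∀ k, p k < q k) (hqp : ∀ k, q k < p (k + 1)) {i : ℕ} (hi : i < p 0) :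
    IsFree p q i := by
  have hp : StrictMono p := strictMono_nat_of_lt_succ fun k => (hpq k).trans (hqp k)
  exact fun k hk => (hi.trans_le (hp.monotone k.zero_le)).not_ge hk.1

lemma isFree_of_mem_Ico (hpq : ∀ k, p k < q k) (hqp : ∀ k, q k < p (k + 1)) {i k : ℕ}
    (hi : i ∈ Ico (q k) (p (k + 1))) : IsFree p q i := by
  have hp : StrictMono p := strictMono_nat_of_lt_succ fun k => (hpq k).trans (hqp k)
  have hq : StrictMono q := strictMono_nat_of_lt_succ fun k => (hqp k).trans (hpq (k + 1))
  intro j hj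
  rcases le_or_gt j k with hjk | hjk
  · exact (hj.2.trans_le (hq.monotone hjk)).not_ge hi.1
  · exact (hi.2.trans_le (hp.monotone hjk)).not_ge hj.1

lemma eventually_exists_isFree_le_mul (hpq : ∀ k, p k < q k) (hqp : ∀ k, q k < p (k + 1)) {A : ℝ}
    (hA : 1 ≤ A) (hqA : ∀ᶠ k in atTop, q k ≤ A * p k) :
    ∀ᶠ j : ℕ in atTop, ∃ i, j ≤ i ∧ i ≤ A * j ∧ IsFree p q i := by
  have hq : StrictMono q := strictMono_nat_of_lt_succ fun k => (hqp k).trans (hpq (k + 1))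
  obtain ⟨k₀, hk₀⟩ := eventually_atTop.1 hqA
  filter_upwards [eventually_ge_atTop (q k₀)] with j hj
  by_cases hfree : IsFree p q j
  · exact ⟨j, le_rfl, le_mul_of_one_le_left (Nat.cast_nonneg j) hA, hfree⟩
  · simp only [IsFree, not_forall, not_not] at hfree
    obtain ⟨k, hpj, hjq⟩ := hfree
    have hk : k₀ ≤ k := (hq.lt_iff_lt.1 (hj.trans_lt hjq)).le
    exact ⟨q k, hjq.le, (hk₀ k hk).trans (by gcongr),
      isFree_of_mem_Ico hpq hqp ⟨le_rfl, hqp k⟩⟩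

variable [DecidablePred (IsFree p q)] {A A' : ℝ}

lemma sub_le_count_isFree (hpq : ∀ k, p k < q k) (hqp : ∀ k, q k < p (k + 1)) (k : ℕ) :
    p (k + 1) - q k ≤ Nat.count (IsFree p q) (p (k + 1)) := by
  obtain ⟨d, hd⟩ := Nat.exists_eq_add_of_le (hqp k).le
  have hfree : ∀ i < d, IsFree p q (q k + i) := fun i hi =>
    isFree_of_mem_Ico hpq hqp ⟨Nat.le_add_right _ _, by omega⟩
  rw [hd, Nat.count_add, Nat.count_of_forall hfree]
  omega

lemma mul_le_mul_count_isFree (hpq : ∀ k, p k < q k) (hqp : ∀ k, q k < p (k + 1)) (hA' : 0 ≤ A')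
    (hAA' : A ≤ A') (hgap : ∀ k, A' * q k ≤ (A' - A) * p (k + 1)) (k : ℕ) :
    A * p k ≤ A' * Nat.count (IsFree p q) (p k) := by
  cases k with
  | zero =>
    rw [Nat.count_of_forall fun i hi => isFree_of_lt hpq hqp hi]
    gcongr
  | succ k =>
    have hcount : (p (k + 1) : ℝ) ≤ Nat.count (IsFree p q) (p (k + 1)) + q k := by
      exact_mod_cast tsub_le_iff_right.1 (sub_le_count_isFree hpq hqp k)
    linarith [hgap k, mul_le_mul_of_nonneg_left hcount hA']

lemma le_mul_count_isFree (hpq : ∀ k, p k < q k) (hqp : ∀ k, q k < p (k + 1)) (hA' : 1 ≤ A')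
    (hAA' : A ≤ A') (hqA : ∀ k, q k ≤ A * p k) (hgap : ∀ k, A' * q k ≤ (A' - A) * p (k + 1))
    (m : ℕ) : m ≤ A' * Nat.count (IsFree p q) m := by
  have hA'0 := zero_le_one.trans hA'
  induction m with
  | zero => simp
  | succ m ih =>
    by_cases hfree : IsFree p q m
    · rw [Nat.count_succ, if_pos hfree]
      push_cast
      linarith
    · simp only [IsFree, not_forall, not_not] at hfree
      obtain ⟨k, hpm, hmq⟩ := hfree
      calc ((m + 1 : ℕ) : ℝ) ≤ q k := by exact_mod_cast hmq
        _ ≤ A * p k := hqA k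
        _ ≤ A' * Nat.count (IsFree p q) (p k) :=
          mul_le_mul_count_isFree hpq hqp hA'0 hAA' hgap k
        _ ≤ A' * Nat.count (IsFree p q) (m + 1) := by
          gcongr
          exact hpm.trans m.le_succ

variable {φ : ℕ → ℝ} {η : ℝ}

lemma exists_zeroRun (hη : liminf (fun n : ℕ => φ n / n) atTop = η) (hη1 : 1 ≤ η) {N : ℕ}
    (hN : N ≠ 0) (hA : η < A) (m : ℕ) :
    ∃ n q : ℕ, m < n / N ∧ n / N < q ∧ q ≤ A * (n / N : ℕ) ∧ φ n ≤ N * q := by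
  obtain ⟨θ, hηθ, hθA⟩ := exists_between hA
  have hθ0 : 0 < θ := by linarith
  have hlarge : ∀ᶠ p : ℕ in atTop, m < p ∧ (θ + 1) / (A - θ) ≤ p :=
    (eventually_gt_atTop m).and (tendsto_natCast_atTop_atTop.eventually_ge_atTop _)
  obtain ⟨n, hφ, hmn, hn⟩ := ((frequently_lt_mul_of_liminf_div hη (by linarith) hηθ).and_eventually
    ((Nat.tendsto_div_const_atTop hN).eventually hlarge)).exists
  rw [div_le_iff₀' (sub_pos.2 hθA)] at hn
  have hq : θ * ((n / N : ℕ) + 1) ≤ ⌊A * (n / N : ℕ)⌋₊ := by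
    linarith [Nat.lt_floor_add_one (A * (n / N : ℕ))]
  refine ⟨n, ⌊A * (n / N : ℕ)⌋₊, hmn, ?_, ?_, ?_⟩
  · have hle : ((n / N : ℕ) + 1 : ℝ) ≤ ⌊A * (n / N : ℕ)⌋₊ :=
      (le_mul_of_one_le_left (by positivity) (by linarith)).trans hq
    exact_mod_cast hle
  · exact Nat.floor_le (mul_nonneg (by linarith) (Nat.cast_nonneg _))
  · have hnN : (n : ℝ) ≤ N * ((n / N : ℕ) + 1) := by
      exact_mod_cast (Nat.lt_mul_div_succ n (Nat.pos_of_ne_zero hN)).le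
    calc φ n ≤ θ * (N * ((n / N : ℕ) + 1)) := hφ.le.trans (by gcongr)
      _ = N * (θ * ((n / N : ℕ) + 1)) := by ring
      _ ≤ N * ⌊A * (n / N : ℕ)⌋₊ := by gcongr

lemma exists_zeroRuns (hη : liminf (fun n : ℕ => φ n / n) atTop = η) (hη1 : 1 ≤ η) {N : ℕ}
    (hN : N ≠ 0) {A : ℕ → ℝ} (hA : ∀ k, η < A k) (K : ℝ) :
    ∃ n q : ℕ → ℕ, ∀ k, n k / N < q k ∧ q k < n (k + 1) / N ∧ K * q k ≤ (n (k + 1) / N : ℕ) ∧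
      q k ≤ A k * (n k / N : ℕ) ∧ φ (n k) ≤ N * q k := by
  choose n q hmn hnq hqA hφ using fun k => exists_zeroRun hη hη1 hN (hA k)
  let m : ℕ → ℕ := Nat.rec 0 fun k m => max (q k m) ⌈K * q k m⌉₊
  refine ⟨fun k => n k (m k), fun k => q k (m k), fun k =>
    ⟨hnq k _, (le_max_left _ _).trans_lt (hmn (k + 1) (m (k + 1))), ?_, hqA k _, hφ k _⟩⟩
  exact (Nat.le_ceil _).trans <|
    Nat.cast_le.2 ((le_max_right _ _).trans (hmn (k + 1) (m (k + 1))).le)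

end ZeroRuns

section Membership

variable {β : ℝ} {N : ℕ} {y : ℕ → ℝ}

lemma abs_tailSum_sub_conv (hβ : 1 < β) (hN : N ≠ 0) (hy : ∀ i, y i ∈ fullEndpoints β N)
    (hfreq : ∃ᶠ i in atTop, y i = 0) (i : ℕ) :
    |tailSum (β ^ N) y 0 - conv β (tailSum (β ^ N) y 0) (N * i)| =
      tailSum (β ^ N) y i / (β ^ N) ^ i := by
  rw [abs_sub_conv (zero_lt_one.trans hβ) (tailSum_mem_Ico hβ hN hy hfreq 0),
    iterate_tailSum hβ hN hy hfreq, pow_mul]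

lemma inv_pow_succ_le_abs_tailSum_sub_conv (hβ : 1 < β) (hN : N ≠ 0)
    (hy : ∀ i, y i ∈ fullEndpoints β N) (hfreq : ∃ᶠ i in atTop, y i = 0) {i n : ℕ}
    (hi : (β ^ N)⁻¹ ≤ y i) (hn : n ≤ N * i) :
    ((β ^ N) ^ (i + 1))⁻¹ ≤ |tailSum (β ^ N) y 0 - conv β (tailSum (β ^ N) y 0) n| := by
  have hβ0 := zero_lt_one.trans hβ
  have hy01 : ∀ i, y i ∈ Icc 0 (1 - (β ^ N)⁻¹) := fun i => fullEndpoints_subset_Icc hβ0 (hy i)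
  have htail : (β ^ N)⁻¹ ≤ tailSum (β ^ N) y i := by
    simpa using inv_pow_succ_le_tailSum (l := 0) (one_lt_pow₀ hβ hN) hy01 hi
  calc ((β ^ N) ^ (i + 1))⁻¹ = (β ^ N)⁻¹ / (β ^ N) ^ i := by field_simp; ring
    _ ≤ tailSum (β ^ N) y i / (β ^ N) ^ i := by gcongr
    _ = _ := (abs_tailSum_sub_conv hβ hN hy hfreq i).symm
    _ ≤ _ := abs_sub_conv_antitone hβ0 (tailSum_mem_Ico hβ hN hy hfreq 0) hn

lemma abs_tailSum_sub_conv_le_inv_pow (hβ : 1 < β) (hN : N ≠ 0)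
    (hy : ∀ i, y i ∈ fullEndpoints β N) (hfreq : ∃ᶠ i in atTop, y i = 0) {p q n : ℕ} (hpq : p ≤ q)
    (hzero : ∀ l ∈ Ico p q, y l = 0) (hn : N * p ≤ n) :
    |tailSum (β ^ N) y 0 - conv β (tailSum (β ^ N) y 0) n| ≤ ((β ^ N) ^ q)⁻¹ := by
  have hβ0 := zero_lt_one.trans hβ
  have hB : 1 < β ^ N := one_lt_pow₀ hβ hN
  have hy01 : ∀ i, y i ∈ Icc 0 (1 - (β ^ N)⁻¹) := fun i => fullEndpoints_subset_Icc hβ0 (hy i)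
  obtain ⟨d, rfl⟩ := Nat.exists_eq_add_of_le hpq
  have htail : tailSum (β ^ N) y p ≤ 1 / (β ^ N) ^ d := by
    have hzero' : ∀ l < d, y (p + l) = 0 := fun l hl => hzero _ ⟨by omega, by omega⟩
    rw [tailSum_eq_div_pow_of_eq_zero hB hy01 hzero']
    gcongr
    exact tailSum_le_one hB hy01 _
  calc _ ≤ _ := abs_sub_conv_antitone hβ0 (tailSum_mem_Ico hβ hN hy hfreq 0) hn
    _ = tailSum (β ^ N) y p / (β ^ N) ^ p := abs_tailSum_sub_conv hβ hN hy hfreq p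
    _ ≤ 1 / (β ^ N) ^ d / (β ^ N) ^ p := by gcongr
    _ = ((β ^ N) ^ (p + d))⁻¹ := by field_simp; ring

variable {η : ℝ}

lemma eventually_rpow_le_abs_tailSum_sub_conv (hβ : 1 < β) (hN : N ≠ 0)
    (hy : ∀ i, y i ∈ fullEndpoints β N) (hfreq : ∃ᶠ i in atTop, y i = 0) (hη0 : 0 ≤ η)
    (hfree : ∀ θ > η, ∀ᶠ j : ℕ in atTop, ∃ i : ℕ, j ≤ i ∧ i ≤ θ * j ∧ (β ^ N)⁻¹ ≤ y i)
    {θ : ℝ} (hθ : η < θ) :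
    ∀ᶠ n : ℕ in atTop,
      β ^ (-(θ * n)) ≤ |tailSum (β ^ N) y 0 - conv β (tailSum (β ^ N) y 0) n| := by
  have hβ0 := zero_lt_one.trans hβ
  obtain ⟨κ, hηκ, hκθ⟩ := exists_between hθ
  have hκ0 : 0 < κ := hη0.trans_lt hηκ
  have hnext := ((tendsto_add_atTop_nat 1).comp (Nat.tendsto_div_const_atTop hN)).eventually
    (hfree κ hηκ)
  filter_upwards [hnext, tendsto_natCast_atTop_atTop.eventually_ge_atTop
    (N * (κ + 1) / (θ - κ))] with n ⟨i, hji, hij, hi⟩ hn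
  simp only [Function.comp_apply, Nat.cast_add, Nat.cast_one] at hji hij
  rw [div_le_iff₀ (sub_pos.2 hκθ)] at hn
  have hni : n ≤ N * i := (Nat.lt_mul_div_succ n (Nat.pos_of_ne_zero hN)).le.trans (by gcongr)
  have hdiv : N * (n / N : ℕ) ≤ (n : ℝ) := by exact_mod_cast Nat.mul_div_le n N
  have hexp : N * (i + 1) ≤ θ * n :=
    calc N * (i + 1) ≤ N * (κ * ((n / N : ℕ) + 1) + 1) := by gcongr
      _ = κ * (N * (n / N : ℕ)) + N * (κ + 1) := by ring
      _ ≤ κ * n + N * (κ + 1) := by gcongr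
      _ ≤ θ * n := by linarith
  calc β ^ (-(θ * n)) ≤ β ^ (-(N * (i + 1) : ℝ)) := by gcongr; exact hβ.le
    _ = ((β ^ N) ^ (i + 1))⁻¹ := by
      rw [Real.rpow_neg hβ0.le, ← pow_mul, ← Real.rpow_natCast]
      push_cast
      rfl
    _ ≤ _ := inv_pow_succ_le_abs_tailSum_sub_conv hβ hN hy hfreq hi hni

lemma tailSum_mem_exactRateSet {φ : ℕ → ℝ} (hβ : 1 < β)
    (hη : liminf (fun n : ℕ => φ n / n) atTop = η) (hη0 : 0 < η) (hN : N ≠ 0)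
    (hy : ∀ i, y i ∈ fullEndpoints β N)
    (hrun : ∃ᶠ n in atTop, ∃ q : ℕ, n / N < q ∧ φ n ≤ N * q ∧ ∀ l ∈ Ico (n / N) q, y l = 0)
    (hfree : ∀ θ > η, ∀ᶠ j : ℕ in atTop, ∃ i : ℕ, j ≤ i ∧ i ≤ θ * j ∧ (β ^ N)⁻¹ ≤ y i) :
    tailSum (β ^ N) y 0 ∈ exactRateSet β φ := by
  have hβ0 := zero_lt_one.trans hβ
  have hfreq : ∃ᶠ i in atTop, y i = 0 :=
    (Nat.tendsto_div_const_atTop hN).frequently <| hrun.mono fun n ⟨q, hnq, _, hzero⟩ =>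
      hzero _ ⟨le_rfl, hnq⟩
  have hlow : ∀ θ > η, ∀ᶠ n : ℕ in atTop, _ := fun θ hθ =>
    eventually_rpow_le_abs_tailSum_sub_conv hβ hN hy hfreq hη0.le hfree hθ
  refine ⟨Ico_subset_Icc_self (tailSum_mem_Ico hβ hN hy hfreq 0),
    liminf_div_eq_neg_one hη hη0 ?_ fun θ hθ => ?_⟩
  · refine (hrun.and_eventually (hlow (η + 1) (lt_add_one η))).mono
      fun n ⟨⟨q, hnq, hφ, hzero⟩, hn⟩ => ?_
    have hpos := (Real.rpow_pos_of_pos hβ0 _).trans_le hn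
    rw [Real.logb_le_iff_le_rpow hβ hpos]
    calc _ ≤ ((β ^ N) ^ q)⁻¹ :=
          abs_tailSum_sub_conv_le_inv_pow hβ hN hy hfreq hnq.le hzero (Nat.mul_div_le n N)
      _ = β ^ (-(N * q : ℝ)) := by
        rw [Real.rpow_neg hβ0.le, ← pow_mul, ← Real.rpow_natCast, Nat.cast_mul]
      _ ≤ β ^ (-φ n) := by gcongr; exact hβ.le
  · filter_upwards [hlow θ hθ] with n hn
    rwa [Real.le_logb_iff_rpow_le hβ ((Real.rpow_pos_of_pos hβ0 _).trans_le hn)]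

end Membership

section LowerBound

variable {β : ℝ} {φ : ℕ → ℝ} {η : ℝ}

lemma exists_positions_avoiding_zeroRuns (hη : liminf (fun n : ℕ => φ n / n) atTop = η)
    (hη1 : 1 ≤ η) {N : ℕ} (hN : N ≠ 0) {A' : ℝ} (hA' : η < A') :
    ∃ (P : ℕ → Prop) (_ : DecidablePred P),
      (∃ᶠ n in atTop, ∃ q : ℕ, n / N < q ∧ φ n ≤ N * q ∧ ∀ l ∈ Ico (n / N) q, ¬P l) ∧
      (∀ θ > η, ∀ᶠ j : ℕ in atTop, ∃ i : ℕ, j ≤ i ∧ i ≤ θ * j ∧ P i) ∧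
      ∀ m : ℕ, m ≤ A' * Nat.count P m := by
  classical
  obtain ⟨A, hηA, hAA'⟩ := exists_between hA'
  obtain ⟨u, -, hu, hlim⟩ := exists_seq_strictAnti_tendsto' hηA
  obtain ⟨n, q, hruns⟩ := exists_zeroRuns hη hη1 hN (fun k => (hu k).1) (A' / (A' - A))
  simp only [forall_and] at hruns
  obtain ⟨hpq, hqp, hgap, hqu, hφ⟩ := hruns
  have hp : StrictMono fun k => n k / N := strictMono_nat_of_lt_succ fun k => (hpq k).trans (hqp k)
  have hn : Tendsto n atTop atTop :=
    tendsto_atTop_mono (fun k => hp.le_apply.trans (Nat.div_le_self _ _)) tendsto_id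
  have hqA : ∀ k, q k ≤ A * (n k / N : ℕ) := fun k => (hqu k).trans (by gcongr; exact (hu k).2.le)
  have hgap' : ∀ k, A' * q k ≤ (A' - A) * (n (k + 1) / N : ℕ) := fun k => by
    simpa [div_mul_eq_mul_div, div_le_iff₀' (sub_pos.2 hAA')] using hgap k
  refine ⟨IsFree (fun k => n k / N) q, inferInstance, ?_, fun θ hθ => ?_,
    le_mul_count_isFree hpq hqp (by linarith) hAA'.le hqA hgap'⟩
  · exact hn.frequently (.of_forall fun k => ⟨q k, hpq k, hφ k, fun l hl hfree => hfree k hl⟩)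
  · refine eventually_exists_isFree_le_mul hpq hqp (hη1.trans hθ.le) ?_
    filter_upwards [hlim.eventually_lt_const hθ] with k hk
    exact (hqu k).trans (by gcongr)

lemma exists_injective_fullEndpoints_diff_zero (hβ : 1 < β) (N : ℕ) :
    ∃ e : Fin ((fullEndpoints β N).ncard - 1) → ℝ,
      Function.Injective e ∧ ∀ c, e c ∈ fullEndpoints β N \ {0} := by
  have hfin := (finite_fullEndpoints (zero_lt_one.trans hβ) N).subset (sdiff_subset (t := {0}))
  have hcard := ncard_sdiff_singleton_of_mem (zero_mem_fullEndpoints hβ N)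
  rw [← hcard, ncard_eq_toFinset_card _ hfin]
  exact ⟨hfin.toFinset.orderEmbOfFin rfl, (hfin.toFinset.orderEmbOfFin rfl).injective, fun c =>
    hfin.mem_toFinset.1 (Finset.orderEmbOfFin_mem _ rfl c)⟩

lemma le_dimH_exactRateSet_of_mul_lt_one (hβ : 1 < β)
    (hη : liminf (fun n : ℕ => φ n / n) atTop = η) (hη1 : 1 ≤ η) {r : NNReal} (hr : 0 < r)
    (hrη : r * η < 1) : (r : ENNReal) ≤ dimH (exactRateSet β φ) := by
  have hβ0 := zero_lt_one.trans hβ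
  have hr' : (0 : ℝ) < r := hr
  obtain ⟨A, hηA, hA⟩ := exists_between ((lt_div_iff₀' hr').2 hrη)
  rw [lt_div_iff₀' hr'] at hA
  have hrA : 0 < r * A := mul_pos hr' (by linarith)
  obtain ⟨N, hcard, hN⟩ := ((eventually_rpow_add_one_le_ncard_fullEndpoints hβ hrA.le hA).and
    (eventually_ne_atTop 0)).exists
  obtain ⟨e, hinj, he⟩ := exists_injective_fullEndpoints_diff_zero hβ N
  have hM : β ^ (r * A * N) ≤ ((fullEndpoints β N).ncard - 1 : ℕ) := by
    refine (le_sub_iff_add_le.2 hcard).trans ?_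
    rw [sub_le_iff_le_add]
    exact_mod_cast le_tsub_add
  have hM1 : 1 < (fullEndpoints β N).ncard - 1 := by
    exact_mod_cast (Real.one_lt_rpow hβ (by positivity)).trans_le hM
  obtain ⟨P, _, hrun, hfree, hcount⟩ := exists_positions_avoiding_zeroRuns hη hη1 hN hηA
  have hsep := pairwise_inv_pow_le_abs_sub_fullEndpoints hβ0 (n := N)
  have hzero := zero_mem_fullEndpoints hβ N
  have he0 : ∀ c, (β ^ N)⁻¹ ≤ e c := fun c => by
    have hnonneg := (fullEndpoints_subset_Icc hβ0 (he c).1).1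
    simpa [abs_of_nonneg hnonneg] using hsep (he c).1 hzero (he c).2
  refine (le_dimH_range_tailSum_spread (one_lt_pow₀ hβ hN) hM1
    (fun c => ⟨he0 c, (fullEndpoints_subset_Icc hβ0 (he c).1).2⟩)
    (fun c d hcd => hsep (he c).1 (he d).1 (hinj.ne hcd)) hcount hr ?_).trans (dimH_mono ?_)
  · rwa [← Real.rpow_natCast, ← Real.rpow_mul hβ0.le, mul_comm (N : ℝ)]
  · rintro _ ⟨a, rfl⟩
    refine tailSum_mem_exactRateSet hβ hη (by linarith) hN
      (spread_mem hzero (fun c => (he c).1) a) (hrun.mono ?_) fun θ hθ => (hfree θ hθ).mono ?_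
    · rintro n ⟨q, hnq, hφ, hP⟩
      exact ⟨q, hnq, hφ, fun l hl => if_neg (hP l hl)⟩
    · rintro j ⟨i, hji, hij, hi⟩
      exact ⟨i, hji, hij, (he0 _).trans_eq (if_pos hi).symm⟩

lemma le_dimH_exactRateSet (hβ : 1 < β) (hη : liminf (fun n : ℕ => φ n / n) atTop = η)
    (hη1 : 1 ≤ η) : ENNReal.ofReal (1 / η) ≤ dimH (exactRateSet β φ) := by
  have hη0 := zero_lt_one.trans_le hη1
  refine le_of_forall_lt_imp_le_of_dense fun c hc => ?_
  obtain ⟨r, hcr, hrη⟩ := ENNReal.lt_iff_exists_nnreal_btwn.1 hc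
  have hr : 0 < r := ENNReal.coe_pos.1 (bot_le.trans_lt hcr)
  have hrη' : (r : ℝ) < 1 / η := ENNReal.coe_lt_ofReal.1 hrη
  rw [lt_div_iff₀ hη0] at hrη'
  exact hcr.le.trans (le_dimH_exactRateSet_of_mul_lt_one hβ hη hη1 hr hrη')

end LowerBound

theorem stmt7_general (β : ℝ) (hβ : 1 < β) (φ : ℕ → ℝ) (η : ℝ)
    (hη : Filter.atTop.liminf (fun n : ℕ => φ n / n) = η) (hη1 : 1 ≤ η) :
    dimH {x ∈ Set.Icc (0:ℝ) 1 |
        Filter.atTop.liminf (fun n : ℕ => Real.logb β |x - conv β x n| / φ n) = -1} =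
      ENNReal.ofReal (1 / η) :=
  le_antisymm (dimH_exactRateSet_le hβ hη (zero_lt_one.trans_le hη1))
    (le_dimH_exactRateSet hβ hη hη1)

/-- Hausdorff dimension of the set where liminf (1/φ(n)) log_β |x − ω_n(x)| = −1. -/
theorem stmt7 (β : ℝ) (hβ : 1 < β) (φ : ℕ → ℝ) (hφ : Monotone φ) (η : ℝ)
    (hη : Filter.atTop.liminf (fun n : ℕ => φ n / n) = η) (hη1 : 1 ≤ η) :
    dimH {x ∈ Set.Icc (0:ℝ) 1 |
        Filter.atTop.liminf (fun n : ℕ => Real.logb β |x - conv β x n| / φ n) = -1} =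
      ENNReal.ofReal (1 / η) :=
  stmt7_general β hβ φ η hη hη1
end

section
/- The set L × L, where L is the set of Liouville numbers, has Hausdorff dimension 1, even though L itself has Hausdorff dimension 0. -/
open Filter MeasureTheory Set

/-- The set of Liouville numbers, defined via the distance to the nearest integer. -/
def Lset : Set ℝ :=
  {x : ℝ | ∀ v : ℝ, 1 < v →
    ∃ᶠ q : ℕ in Filter.atTop, |(q : ℝ) * x - round ((q : ℝ) * x)| < (q : ℝ) ^ (-v)}

/-!
Write `W(v)` for the reals `x` with `‖q x‖ < q ^ (-v)` for infinitely many `q`. Such an `x` lies in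
infinitely many of the balls of radius `q ^ (-(v + 1))` around the fractions `p / q`, so covering by
the tails of this family gives `dimH W(v) ≤ 2 / (v + 1)`, and letting `v → ∞` gives `dimH L = 0`.

Since `L × L ⊆ L × ℝ`, the upper bound on the product follows from
`dimH (s × t) ≤ dimH s + dim_B t`, with the upper box dimension `dim_B`, applied with `t` a unit
interval. For the lower bound, `L` is comeagre, so for every `x` the comeagre sets `L` and `x - L`
meet and `L + L = ℝ` (Erdős); thus `ℝ` is a Lipschitz image of `L × L`.
-/

open Metric
open scoped ENNReal NNReal Topology Pointwise

section HausdorffNull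

variable {X : Type*} [EMetricSpace X] [MeasurableSpace X] [BorelSpace X] {s : Set X} {d : ℝ}

theorem hausdorffMeasure_eq_zero_of_forall_exists_cover (hd : 0 < d)
    (h : ∀ ε : ℝ≥0∞, ε ≠ 0 → ∃ (ι : Type*) (_ : Countable ι) (U : ι → Set X),
      s ⊆ ⋃ i, U i ∧ ∑' i, ediam (U i) ^ d ≤ ε) :
    μH[d] s = 0 := by
  choose! ι hι U hsU hU using fun n : ℕ ↦ h (n : ℝ≥0∞)⁻¹ (by simp)
  have hmesh : Tendsto (fun n : ℕ ↦ ((n : ℝ≥0∞)⁻¹) ^ d⁻¹) atTop (𝓝 0) := by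
    simpa [hd] using ENNReal.tendsto_inv_nat_nhds_zero.ennrpow_const d⁻¹
  refine le_antisymm ?_ zero_le
  calc μH[d] s
      ≤ liminf (fun n ↦ ∑' i, ediam (U n i) ^ d) atTop :=
        Measure.hausdorffMeasure_le_liminf_tsum d s _ hmesh U
          (.of_forall fun n i ↦ (ENNReal.le_rpow_inv_iff hd).2 <| (ENNReal.le_tsum i).trans (hU n))
          (.of_forall hsU)
    _ ≤ liminf (fun n : ℕ ↦ (n : ℝ≥0∞)⁻¹) atTop := liminf_le_liminf (.of_forall hU)
    _ = 0 := ENNReal.tendsto_inv_nat_nhds_zero.liminf_eq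

theorem exists_cover_tsum_ediam_rpow_lt (hd : 0 < d) (hs : μH[d] s = 0) {ε : ℝ≥0∞} (hε : ε ≠ 0) :
    ∃ U : ℕ → Set X, s ⊆ ⋃ n, U n ∧ ∑' n, ediam (U n) ^ d < ε := by
  have hlt := (Measure.hausdorffMeasure_apply d s).symm.trans hs
  simp only [ENNReal.iSup_eq_zero] at hlt
  have := (hlt 1 one_pos).trans_lt (pos_iff_ne_zero.2 hε)
  simp only [iInf_lt_iff] at this
  obtain ⟨U, hsU, -, hU⟩ := this
  refine ⟨U, hsU, lt_of_eq_of_lt (tsum_congr fun n ↦ ?_) hU⟩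
  obtain hn | hn := (U n).eq_empty_or_nonempty <;> simp [hn, hd]

theorem hausdorffMeasure_limsup_cofinite_eq_zero {ι : Type*} [Countable ι] {U : ι → Set X}
    (hd : 0 < d) (hU : ∑' i, ediam (U i) ^ d ≠ ∞) : μH[d] (limsup U cofinite) = 0 := by
  refine hausdorffMeasure_eq_zero_of_forall_exists_cover hd fun ε hε ↦ ?_
  obtain ⟨t, ht⟩ := ((ENNReal.tendsto_tsum_compl_atTop_zero hU).eventually_le_const
    (pos_iff_ne_zero.2 hε)).exists
  refine ⟨{i // i ∉ t}, inferInstance, fun i ↦ U i, fun x hx ↦ ?_, ht⟩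
  rw [cofinite.limsup_set_eq] at hx
  obtain ⟨i, hxi, hit⟩ := Set.Infinite.exists_notMem_finset hx t
  exact mem_iUnion.2 ⟨⟨i, hit⟩, hxi⟩

end HausdorffNull

section Prod

variable {X Y : Type*}

theorem ediam_prod_le_max [PseudoEMetricSpace X] [PseudoEMetricSpace Y] (s : Set X) (t : Set Y) :
    ediam (s ×ˢ t) ≤ max (ediam s) (ediam t) :=
  ediam_le fun _ hx _ hy ↦
    max_le_max (edist_le_ediam_of_mem hx.1 hy.1) (edist_le_ediam_of_mem hx.2 hy.2)

theorem exists_cover_tsum_radius_rpow_lt [EMetricSpace X] [MeasurableSpace X] [BorelSpace X]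
    {s : Set X} {d : ℝ} (hd : 0 < d) (hs : μH[d] s = 0) {ε : ℝ≥0∞} (hε : ε ≠ 0) :
    ∃ (U : ℕ → Set X) (r : ℕ → ℝ≥0), s ⊆ ⋃ n, U n ∧ (∀ n, 0 < r n) ∧ (∀ n, ediam (U n) ≤ r n) ∧
      ∑' n, (r n : ℝ≥0∞) ^ d < ε := by
  obtain ⟨U, hsU, hU⟩ := exists_cover_tsum_ediam_rpow_lt hd hs hε
  obtain ⟨δ, hδ, hδU⟩ := ENNReal.exists_pos_sum_of_countable (tsub_pos_of_lt hU).ne' ℕ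
  have hfin (n : ℕ) : (ediam (U n) ^ d + δ n) ^ d⁻¹ ≠ ∞ := by
    have := ne_top_of_le_ne_top hU.ne_top (ENNReal.le_tsum (f := fun n ↦ ediam (U n) ^ d) n)
    finiteness
  lift (fun n ↦ (ediam (U n) ^ d + δ n) ^ d⁻¹ : ℕ → ℝ≥0∞) to ℕ → ℝ≥0 using hfin with r hr
  simp only [funext_iff] at hr
  refine ⟨U, r, hsU, fun n ↦ ?_, fun n ↦ ?_, ?_⟩
  · rw [← ENNReal.coe_pos, hr]
    exact ENNReal.rpow_pos_of_nonneg (by simp [hδ]) (by positivity)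
  · rw [hr, ENNReal.le_rpow_inv_iff hd]
    exact le_self_add
  · simp only [hr, ENNReal.rpow_inv_rpow hd.ne', ENNReal.tsum_add]
    exact lt_tsub_iff_left.1 hδU

/-- A box-counting bound: `C ε ^ (-D)` balls of radius `ε` suffice to cover `t` at every scale
`ε ≤ 1`, so that the upper box dimension of `t` is at most `D`. -/
def HasBoundedCoveringNumber [PseudoEMetricSpace Y] (t : Set Y) (C D : ℝ≥0) : Prop :=
  ∀ ε : ℝ≥0, 0 < ε → ε ≤ 1 → (coveringNumber ε t : ℝ≥0∞) ≤ C * (ε : ℝ≥0∞) ^ (-(D : ℝ))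

theorem HasBoundedCoveringNumber.coveringNumber_ne_top [PseudoEMetricSpace Y]
    {t : Set Y} {C D : ℝ≥0} (ht : HasBoundedCoveringNumber t C D) {ε : ℝ≥0} (hε : 0 < ε)
    (hε1 : ε ≤ 1) : coveringNumber ε t ≠ ⊤ := by
  have : (ε : ℝ≥0∞) ≠ 0 := by simpa using hε.ne'
  rw [← ENat.toENNReal_ne_top]
  exact ne_top_of_le_ne_top (by finiteness) (ht ε hε hε1)

theorem prod_subset_iUnion_minimalCover [PseudoEMetricSpace Y] (s : Set X) {t : Set Y} {ε : ℝ≥0}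
    (ht : coveringNumber ε t ≠ ⊤) :
    s ×ˢ t ⊆ ⋃ y : minimalCover ε t, s ×ˢ closedEBall (y : Y) ε := by
  rw [← prod_iUnion, iUnion_subtype]
  exact prod_mono_right (isCover_iff_subset_iUnion_closedEBall.1 (isCover_minimalCover ht))

variable [EMetricSpace X] [EMetricSpace Y] {s : Set X} {t : Set Y} {C D : ℝ≥0}

theorem HasBoundedCoveringNumber.tsum_ediam_prod_rpow_le (ht : HasBoundedCoveringNumber t C D)
    {d : ℝ} (hd : 0 ≤ d) {r : ℝ≥0} (hr : 0 < r) (hr1 : r ≤ 1) (hs : ediam s ≤ r) :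
    ∑' y : minimalCover r t, ediam (s ×ˢ closedEBall (y : Y) r) ^ (d + D) ≤
      C * 2 ^ (d + D) * (r : ℝ≥0∞) ^ d := by
  have hr' : (r : ℝ≥0∞) ≠ 0 := by simpa using hr.ne'
  have hdiam (y : Y) : ediam (s ×ˢ closedEBall y r) ≤ 2 * r :=
    (ediam_prod_le_max _ _).trans <| max_le
      (hs.trans <| le_mul_of_one_le_left' one_le_two) ediam_closedEBall_le
  calc ∑' y : minimalCover r t, ediam (s ×ˢ closedEBall (y : Y) r) ^ (d + D)
      ≤ ∑' _ : minimalCover r t, (2 * r : ℝ≥0∞) ^ (d + D) := by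
        gcongr
        exact hdiam _
    _ = (coveringNumber r t : ℝ≥0∞) * (2 * r) ^ (d + D) := by
        rw [ENNReal.tsum_const, ← encard_minimalCover (ht.coveringNumber_ne_top hr hr1), encard]
    _ ≤ C * (r : ℝ≥0∞) ^ (-(D : ℝ)) * (2 * r) ^ (d + D) := by
        gcongr
        exact ht r hr hr1
    _ = C * 2 ^ (d + D) * ((r : ℝ≥0∞) ^ (-(D : ℝ)) * (r : ℝ≥0∞) ^ (d + D)) := by
        rw [ENNReal.mul_rpow_of_nonneg _ _ (by positivity), mul_mul_mul_comm]
    _ = C * 2 ^ (d + D) * (r : ℝ≥0∞) ^ d := by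
        rw [← ENNReal.rpow_add _ _ hr' ENNReal.coe_ne_top, neg_add_cancel_comm_assoc]

theorem hausdorffMeasure_prod_eq_zero [MeasurableSpace X] [BorelSpace X]
    [MeasurableSpace (X × Y)] [BorelSpace (X × Y)] {d : ℝ} (hd : 0 < d) (hs : μH[d] s = 0)
    (ht : HasBoundedCoveringNumber t C D) : μH[d + D] (s ×ˢ t) = 0 := by
  refine hausdorffMeasure_eq_zero_of_forall_exists_cover (by positivity) fun ε hε ↦ ?_
  obtain ⟨η, hη, hηε⟩ := ENNReal.exists_nnreal_pos_mul_lt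
    (a := C * 2 ^ (d + D)) (by finiteness) hε
  obtain ⟨U, r, hsU, hr, hUr, hsum⟩ := exists_cover_tsum_radius_rpow_lt hd hs
    (ε := min η 1) (by simpa using hη.ne')
  have hr1 (n : ℕ) : r n ≤ 1 := by
    have : (r n : ℝ≥0∞) ^ d ≤ 1 ^ d :=
      calc (r n : ℝ≥0∞) ^ d ≤ ∑' n, (r n : ℝ≥0∞) ^ d := ENNReal.le_tsum n
        _ ≤ min (η : ℝ≥0∞) 1 := hsum.le
        _ ≤ 1 ^ d := by simp
    exact_mod_cast (ENNReal.rpow_le_rpow_iff hd).1 this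
  have (n : ℕ) : Countable (minimalCover (r n) t) := finite_minimalCover.countable
  refine ⟨Σ n, minimalCover (r n) t, inferInstance,
    fun i ↦ U i.1 ×ˢ closedEBall (i.2 : Y) (r i.1), ?_, ?_⟩
  · calc s ×ˢ t ⊆ ⋃ n, U n ×ˢ t := by rw [← iUnion_prod_const]; exact prod_mono_left hsU
      _ ⊆ ⋃ n, ⋃ y : minimalCover (r n) t, U n ×ˢ closedEBall (y : Y) (r n) :=
        iUnion_mono fun n ↦
          prod_subset_iUnion_minimalCover _ (ht.coveringNumber_ne_top (hr n) (hr1 n))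
      _ = ⋃ i : Σ n, minimalCover (r n) t, U i.1 ×ˢ closedEBall (i.2 : Y) (r i.1) :=
        (iUnion_sigma fun i : Σ n, minimalCover (r n) t ↦
          U i.1 ×ˢ closedEBall (i.2 : Y) (r i.1)).symm
  · rw [ENNReal.tsum_sigma']
    calc ∑' n, ∑' y : minimalCover (r n) t, ediam (U n ×ˢ closedEBall (y : Y) (r n)) ^ (d + D)
        ≤ ∑' n, C * 2 ^ (d + D) * (r n : ℝ≥0∞) ^ d :=
          ENNReal.tsum_le_tsum fun n ↦ ht.tsum_ediam_prod_rpow_le hd.le (hr n) (hr1 n) (hUr n)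
      _ = (∑' n, (r n : ℝ≥0∞) ^ d) * (C * 2 ^ (d + D)) := by rw [ENNReal.tsum_mul_left, mul_comm]
      _ ≤ η * (C * 2 ^ (d + D)) := by gcongr; exact hsum.le.trans (min_le_left _ _)
      _ ≤ ε := hηε.le

theorem dimH_prod_le (ht : HasBoundedCoveringNumber t C D) : dimH (s ×ˢ t) ≤ dimH s + D := by
  borelize X (X × Y)
  refine ENNReal.le_of_forall_pos_le_add fun ε hε hlt ↦ ?_
  have hfin : dimH s ≠ ∞ := (ENNReal.add_lt_top.1 hlt).1.ne
  lift dimH s to ℝ≥0 using hfin with a ha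
  have hs : μH[(a + ε : ℝ≥0)] s = 0 := hausdorffMeasure_of_dimH_lt <| by
    rw [← ha]
    exact_mod_cast lt_add_of_pos_right a hε
  have hst : μH[(a + ε + D : ℝ≥0)] (s ×ˢ t) ≠ ∞ := by
    rw [NNReal.coe_add, hausdorffMeasure_prod_eq_zero (by positivity) hs ht]
    exact ENNReal.zero_ne_top
  calc dimH (s ×ˢ t) ≤ ↑(a + ε + D) := dimH_le_of_hausdorffMeasure_ne_top hst
    _ = a + D + ε := by push_cast; ring

end Prod

section Real

theorem isCover_Icc_image_add_mul_range {ε : ℝ≥0} (hε : 0 < ε) (a b : ℝ) :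
    IsCover ε (Icc a b) ((fun k : ℕ ↦ a + k * (ε : ℝ)) '' Finset.range (⌊(b - a) / ε⌋₊ + 1)) := by
  have hε' : (0 : ℝ) < ε := hε
  rw [isCover_iff_subset_iUnion_closedBall]
  intro x hx
  have h0 : 0 ≤ (x - a) / ε := div_nonneg (sub_nonneg.2 hx.1) hε'.le
  have hle : ⌊(x - a) / ε⌋₊ * (ε : ℝ) ≤ x - a := (le_div_iff₀ hε').1 (Nat.floor_le h0)
  have hlt : x - a < (⌊(x - a) / ε⌋₊ + 1) * (ε : ℝ) :=
    (div_lt_iff₀ hε').1 (Nat.lt_floor_add_one _)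
  have hmem : ⌊(x - a) / ε⌋₊ ∈ Finset.range (⌊(b - a) / ε⌋₊ + 1) := by
    rw [Finset.mem_range, Nat.lt_succ_iff]
    exact Nat.floor_mono (by gcongr; exact hx.2)
  refine mem_biUnion (mem_image_of_mem _ hmem) ?_
  rw [mem_closedBall, Real.dist_eq, abs_le]
  constructor <;> linarith

theorem image_add_mul_range_subset_Icc {ε : ℝ≥0} (hε : 0 < ε) {a b : ℝ} (hab : a ≤ b) :
    (fun k : ℕ ↦ a + k * (ε : ℝ)) '' Finset.range (⌊(b - a) / ε⌋₊ + 1) ⊆ Icc a b := by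
  rintro _ ⟨k, hk, rfl⟩
  have hkN : k ≤ ⌊(b - a) / ε⌋₊ := Nat.lt_succ_iff.1 (Finset.mem_range.1 hk)
  have hkε : k * (ε : ℝ) ≤ b - a :=
    (le_div_iff₀ (NNReal.coe_pos.2 hε)).1 <|
      (Nat.le_floor_iff (div_nonneg (sub_nonneg.2 hab) ε.2)).1 hkN
  exact ⟨le_add_of_nonneg_right (by positivity), by linarith⟩

theorem coveringNumber_Icc_le {ε : ℝ≥0} (hε : 0 < ε) (a b : ℝ) :
    coveringNumber ε (Icc a b) ≤ ⌊(b - a) / ε⌋₊ + 1 := by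
  obtain hab | hab := lt_or_ge b a
  · simp [Icc_eq_empty hab.not_ge]
  calc coveringNumber ε (Icc a b)
      ≤ ((fun k : ℕ ↦ a + k * (ε : ℝ)) '' Finset.range (⌊(b - a) / ε⌋₊ + 1)).encard :=
        (isCover_Icc_image_add_mul_range hε a b).coveringNumber_le_encard
          (image_add_mul_range_subset_Icc hε hab)
    _ ≤ (Finset.range (⌊(b - a) / ε⌋₊ + 1) : Set ℕ).encard := encard_image_le _ _
    _ = ⌊(b - a) / ε⌋₊ + 1 := by
        rw [encard_coe_eq_coe_finsetCard, Finset.card_range, Nat.cast_add_one]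

theorem hasBoundedCoveringNumber_Icc (a b : ℝ) :
    HasBoundedCoveringNumber (Icc a b) ((b - a).toNNReal + 1) 1 := by
  intro ε hε hε1
  have hfloor : (⌊(b - a) / ε⌋₊ : ℝ≥0) ≤ (b - a).toNNReal / ε := by
    rw [← NNReal.coe_le_coe, NNReal.coe_natCast, NNReal.coe_div]
    calc (⌊(b - a) / ε⌋₊ : ℝ) ≤ ⌊((b - a).toNNReal : ℝ) / ε⌋₊ := by
          gcongr
          exact Real.le_coe_toNNReal _
      _ ≤ (b - a).toNNReal / ε := Nat.floor_le (by positivity)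
  calc (coveringNumber ε (Icc a b) : ℝ≥0∞)
      ≤ ((⌊(b - a) / ε⌋₊ + 1 : ℕ∞) : ℝ≥0∞) := ENat.toENNReal_le.2 (coveringNumber_Icc_le hε a b)
    _ = ((⌊(b - a) / ε⌋₊ + 1 : ℝ≥0) : ℝ≥0∞) := by simp
    _ ≤ ((((b - a).toNNReal / ε + 1 / ε) : ℝ≥0) : ℝ≥0∞) := by
        gcongr
        exact (one_le_div hε).2 hε1
    _ = ((b - a).toNNReal + 1 : ℝ≥0) * (ε : ℝ≥0∞) ^ (-((1 : ℝ≥0) : ℝ)) := by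
        rw [← add_div, ENNReal.coe_div hε.ne', NNReal.coe_one, ENNReal.rpow_neg_one, div_eq_mul_inv]

theorem dimH_prod_univ_real_le {X : Type*} [EMetricSpace X] (s : Set X) :
    dimH (s ×ˢ (univ : Set ℝ)) ≤ dimH s + 1 := by
  rw [← iUnion_Icc_intCast ℝ, prod_iUnion, dimH_iUnion]
  exact iSup_le fun m ↦ dimH_prod_le (hasBoundedCoveringNumber_Icc _ _)

end Real

section Sum

theorem add_eq_univ_of_mem_residual {G : Type*} [AddGroup G] [TopologicalSpace G]
    [IsTopologicalAddGroup G] [BaireSpace G] {s t : Set G} (hs : s ∈ residual G)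
    (ht : t ∈ residual G) : s + t = univ := by
  refine eq_univ_of_forall fun x ↦ ?_
  have hsub : ∀ᶠ y in residual G, x - y ∈ s :=
    tendsto_residual_of_isOpenMap (Homeomorph.subLeft x).continuous
      (Homeomorph.subLeft x).isOpenMap hs
  obtain ⟨y, hyt, hys⟩ := (dense_of_mem_residual (inter_mem ht hsub)).nonempty
  exact ⟨x - y, hys, y, hyt, sub_add_cancel x y⟩

theorem dimH_add_le_dimH_prod {E : Type*} [NormedAddCommGroup E] (s t : Set E) :
    dimH (s + t) ≤ dimH (s ×ˢ t) := by
  rw [← add_image_prod]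
  exact (LipschitzWith.prod_fst.add LipschitzWith.prod_snd).dimH_image_le _

end Sum

section Liouville

/-- The reals approximable to order `v` by fractions, `‖q x‖ < q ^ (-v)` for infinitely many `q`:
the sets, called `W(v)` above, whose intersection over `v > 1` is `Lset`. -/
def approximableSet (v : ℝ) : Set ℝ :=
  {x | ∃ᶠ q : ℕ in atTop, |(q : ℝ) * x - round ((q : ℝ) * x)| < (q : ℝ) ^ (-v)}

theorem Lset_subset_approximableSet {v : ℝ} (hv : 1 < v) : Lset ⊆ approximableSet v :=
  fun _ hx ↦ hx v hv

theorem round_natCast_mul_mem_Icc {m : ℤ} {x : ℝ} (hx : x ∈ Icc (m : ℝ) (m + 1)) (q : ℕ) :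
    round (q * x) ∈ Finset.Icc (q * m) (q * m + q) := by
  have hl : (q : ℝ) * m ≤ q * x := by gcongr; exact hx.1
  have hr : (q : ℝ) * x ≤ q * (m + 1) := by gcongr; exact hx.2
  rw [Finset.mem_Icc, round_eq, Int.le_floor, ← Int.lt_add_one_iff, Int.floor_lt]
  push_cast
  constructor <;> linarith

theorem summable_natCast_add_one_mul_rpow {s : ℝ} (hs : s < -2) :
    Summable fun q : ℕ ↦ ((q : ℝ) + 1) * (q : ℝ) ^ s := by
  have h (q : ℕ) : ((q : ℝ) + 1) * (q : ℝ) ^ s = (q : ℝ) ^ (1 + s) + (q : ℝ) ^ s := by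
    rw [Real.rpow_one_add' q.cast_nonneg (by linarith)]
    ring
  simp only [h]
  exact (Real.summable_nat_rpow.2 (by linarith)).add (Real.summable_nat_rpow.2 (by linarith))

/-- The balls of radius `q ^ (-(v + 1))` around the fractions `p / q` in `[m, m + 1]`, indexed by
the pairs `(q, p)`. This is the cover of `approximableSet v ∩ [m, m + 1]` behind the bound on its
dimension. -/
def rationalBall (v : ℝ) (m : ℤ) (i : Σ q : ℕ, Finset.Icc (q * m) (q * m + q)) : Set ℝ :=
  closedBall ((i.2 : ℤ) / (i.1 : ℝ)) ((i.1 : ℝ) ^ (-(v + 1)))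

theorem abs_natCast_mul_sub_intCast {q : ℕ} (hq : 0 < q) (x : ℝ) (p : ℤ) :
    |q * x - p| = q * |x - p / q| := by
  have hq0 : (0 : ℝ) < q := Nat.cast_pos.2 hq
  rw [← abs_of_pos hq0, ← abs_mul, abs_of_pos hq0, mul_sub, mul_div_cancel₀ _ hq0.ne']

theorem approximableSet_inter_Icc_subset_limsup (v : ℝ) (m : ℤ) :
    approximableSet v ∩ Icc (m : ℝ) (m + 1) ⊆ limsup (rationalBall v m) cofinite := by
  rintro x ⟨hx, hxm⟩
  have hball {q : ℕ} (hqx : |q * x - round (q * x)| < (q : ℝ) ^ (-v)) (hq : 0 < q) :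
      dist x (round (q * x) / q) ≤ (q : ℝ) ^ (-(v + 1)) := by
    have hq0 : (0 : ℝ) < q := Nat.cast_pos.2 hq
    rw [abs_natCast_mul_sub_intCast hq] at hqx
    rw [Real.dist_eq, neg_add', Real.rpow_sub_one hq0.ne', le_div_iff₀' hq0]
    exact hqx.le
  have hinf : {q : ℕ | |q * x - round (q * x)| < (q : ℝ) ^ (-v) ∧ 0 < q}.Infinite :=
    Nat.frequently_atTop_iff_infinite.1 (hx.and_eventually (eventually_gt_atTop 0))
  rw [cofinite.limsup_set_eq]
  refine Set.Infinite.of_image Sigma.fst (hinf.mono ?_)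
  rintro q ⟨hqx, hq⟩
  exact ⟨⟨q, round (q * x), round_natCast_mul_mem_Icc hxm q⟩, hball hqx hq, rfl⟩

theorem ediam_rationalBall (v : ℝ) (m : ℤ) (i : Σ q : ℕ, Finset.Icc (q * m) (q * m + q)) :
    ediam (rationalBall v m i) = ENNReal.ofReal (2 * (i.1 : ℝ) ^ (-(v + 1))) := by
  rw [rationalBall, Real.closedBall_eq_Icc, Real.ediam_Icc]
  ring_nf

theorem tsum_ediam_rationalBall_rpow_ne_top {v d : ℝ} (hd : 0 ≤ d) (hvd : 2 < (v + 1) * d)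
    (m : ℤ) : ∑' i, ediam (rationalBall v m i) ^ d ≠ ∞ := by
  have hterm (q : ℕ) : ∑' p, ediam (rationalBall v m ⟨q, p⟩) ^ d =
      ENNReal.ofReal (2 ^ d * (((q : ℝ) + 1) * (q : ℝ) ^ (-(v + 1) * d))) := by
    have hcard : ((Finset.Icc (q * m) (q * m + q)).card : ℝ) = q + 1 := by
      rw [Int.card_Icc, add_assoc, add_sub_cancel_left]
      exact_mod_cast rfl
    calc ∑' p, ediam (rationalBall v m ⟨q, p⟩) ^ d
        = (Finset.Icc (q * m) (q * m + q)).card *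
            ENNReal.ofReal (2 * (q : ℝ) ^ (-(v + 1))) ^ d := by
          simp only [ediam_rationalBall, tsum_fintype, Finset.sum_const, Finset.card_univ,
            Fintype.card_coe, nsmul_eq_mul]
      _ = ENNReal.ofReal ((q + 1) * (2 * (q : ℝ) ^ (-(v + 1))) ^ d) := by
          rw [ENNReal.ofReal_rpow_of_nonneg (by positivity) hd, ← ENNReal.ofReal_natCast, hcard,
            ← ENNReal.ofReal_mul (by positivity)]
      _ = ENNReal.ofReal (2 ^ d * (((q : ℝ) + 1) * (q : ℝ) ^ (-(v + 1) * d))) := by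
          rw [Real.mul_rpow zero_le_two (by positivity), ← Real.rpow_mul q.cast_nonneg,
            mul_left_comm]
  rw [ENNReal.tsum_sigma', tsum_congr hterm]
  exact ((summable_natCast_add_one_mul_rpow (by linarith)).mul_left _).tsum_ofReal_ne_top

theorem dimH_approximableSet_le {v : ℝ} (hv : -1 < v) :
    dimH (approximableSet v) ≤ ENNReal.ofReal (2 / (v + 1)) := by
  have hv1 : 0 < v + 1 := neg_lt_iff_pos_add.1 hv
  rw [← inter_univ (approximableSet v), ← iUnion_Icc_intCast ℝ, inter_iUnion, dimH_iUnion]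
  refine iSup_le fun m ↦ le_of_forall_gt_imp_ge_of_dense fun c hc ↦ ?_
  obtain ⟨d, hvd, hdc⟩ := ENNReal.lt_iff_exists_nnreal_btwn.1 hc
  replace hvd : 2 / (v + 1) < d := (ENNReal.ofReal_lt_coe_iff (by positivity)).1 hvd
  have hd : (0 : ℝ) < d := lt_trans (by positivity) hvd
  have hnull : μH[d] (limsup (rationalBall v m) cofinite) = 0 :=
    hausdorffMeasure_limsup_cofinite_eq_zero hd <|
      tsum_ediam_rationalBall_rpow_ne_top hd.le ((div_lt_iff₀' hv1).1 hvd) m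
  calc dimH (approximableSet v ∩ Icc (m : ℝ) (m + 1))
      ≤ dimH (limsup (rationalBall v m) cofinite) :=
        dimH_mono (approximableSet_inter_Icc_subset_limsup v m)
    _ ≤ d := dimH_le_of_hausdorffMeasure_ne_top (hnull ▸ ENNReal.zero_ne_top)
    _ ≤ c := hdc.le

theorem dimH_Lset : dimH Lset = 0 := by
  have hlim : Tendsto (fun v : ℝ ↦ ENNReal.ofReal (2 / (v + 1))) atTop (𝓝 0) := by
    rw [← ENNReal.ofReal_zero]
    exact ENNReal.tendsto_ofReal <|
      tendsto_const_nhds.div_atTop (tendsto_atTop_add_const_right _ _ tendsto_id)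
  refine le_antisymm (ge_of_tendsto hlim ?_) zero_le
  filter_upwards [eventually_gt_atTop 1] with v hv
  exact (dimH_mono (Lset_subset_approximableSet hv)).trans (dimH_approximableSet_le (by linarith))

theorem mem_approximableSet_of_liouville {x : ℝ} (hx : Liouville x) (v : ℝ) :
    x ∈ approximableSet v := by
  have hfreq := (hx.liouvilleWith (v + 2)).frequently_lt_rpow_neg (q := v + 1) (by linarith)
  refine (hfreq.and_eventually (eventually_gt_atTop 0)).mono ?_
  rintro q ⟨⟨p, -, hp⟩, hq⟩
  have hq0 : (0 : ℝ) < q := Nat.cast_pos.2 hq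
  calc |q * x - round (q * x)| ≤ |q * x - p| := round_le _ p
    _ = q * |x - p / q| := abs_natCast_mul_sub_intCast hq x p
    _ < q * (q : ℝ) ^ (-(v + 1)) := by gcongr
    _ = (q : ℝ) ^ (-v) := by
        rw [neg_add', Real.rpow_sub_one hq0.ne', mul_div_cancel₀ _ hq0.ne']

theorem Lset_mem_residual : Lset ∈ residual ℝ :=
  eventually_residual_liouville.mono fun _ hx v _ ↦ mem_approximableSet_of_liouville hx v

end Liouville

/-- dim_H (L × L) = 1 although dim_H L = 0. -/
theorem stmt11 : dimH (Lset ×ˢ Lset) = 1 ∧ dimH Lset = 0 := by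
  refine ⟨le_antisymm ?_ ?_, dimH_Lset⟩
  · calc dimH (Lset ×ˢ Lset) ≤ dimH (Lset ×ˢ univ) := dimH_mono (prod_mono_right (subset_univ _))
      _ ≤ dimH Lset + 1 := dimH_prod_univ_real_le Lset
      _ = 1 := by rw [dimH_Lset, zero_add]
  · calc 1 = dimH (univ : Set ℝ) := Real.dimH_univ.symm
      _ = dimH (Lset + Lset) := by
          rw [add_eq_univ_of_mem_residual Lset_mem_residual Lset_mem_residual]
      _ ≤ dimH (Lset ×ˢ Lset) := dimH_add_le_dimH_prod Lset Lset
end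

section
/- For 1 ≤ i ≤ d, let ψ_i : ℕ → ℝ^+ and b_i ∈ ℕ_{≥2}, and set S(ψ_i) = { x ∈ [0,1] : ‖b_i^n x‖ < ψ_i(n) for infinitely many n }. Then dim_H (S(ψ_1) × ⋯ × S(ψ_d)) ≥ min_{1 ≤ i ≤ d} { d − 1 + dim_H S(ψ_i) }. -/
open Filter MeasureTheory Set
open scoped ENNReal

/-- The shrinking target set `S(ψ)` for the map x ↦ bⁿx, via the distance to the nearest integer. -/
def Sset (b : ℕ) (ψ : ℕ → ℝ) : Set ℝ :=
  {x ∈ Set.Icc (0:ℝ) 1 |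
    ∃ᶠ n : ℕ in Filter.atTop, |(b : ℝ) ^ n * x - round ((b : ℝ) ^ n * x)| < ψ n}

/-!
Let `t` be `0` or smaller than `dim_H S(ψ_i)` for every `i`. By the Hausdorff–Cantelli lemma, for
each `i` there are infinitely many `n` and some `l` with `t (n + l) ≤ n` and `b_i ^ (-l) < ψ_i(n)`;
otherwise `t > 0` and `ψ_i(n) ≤ b_i · b_i ^ (-n (1 / t - 1))` eventually, which forces `dim_H S(ψ_i)
≤ t`. A real whose `b_i`-ary digits vanish in infinitely many such windows `[n, n + l)` lies in
`S(ψ_i)`. Choose the windows one after the other, visiting every coordinate infinitely often, each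
starting so far out that all the earlier ones, in whichever coordinate, are negligible compared with
it. At a scale `r` essentially one window is then active. If it lies in coordinate `i`, it occupies
at most a proportion `1 - t` of the `log (1 / r) / log b_i` relevant digits, while all other
coordinates are essentially free. The product measure of uniformly distributed free digits thus
gives mass about `r ^ (d - (1 - t))` to a cube of side `r`, and the mass distribution principle
yields the dimension `d - 1 + t`. The single active window is what makes the loss `1 - t` occur once
and not once per coordinate.
-/

open scoped Finset NNReal Topology

section HausdorffDimension

variable {X : Type*} [EMetricSpace X]

theorem le_dimH_of_measure_closedEBall_le [MeasurableSpace X] [BorelSpace X] {μ : Measure X}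
    {E : Set X} (hE : μ E ≠ 0) {C s : ℝ≥0} {r₀ : ℝ≥0∞} (hr₀ : 0 < r₀)
    (hμ : ∀ x r, 0 < r → r ≤ r₀ → μ (Metric.closedEBall x r) ≤ C * r ^ (s : ℝ)) :
    s ≤ dimH E := by
  obtain ⟨ε, hε, hεr₀⟩ := exists_between hr₀
  have measure_le_ediam : ∀ U : Set X, Metric.ediam U ≤ ε →
      μ U ≤ Metric.ediam U ^ (s : ℝ) * C := by
    intro U hU
    obtain rfl | ⟨x, hx⟩ := U.eq_empty_or_nonempty
    · simp
    have hlim : Tendsto (fun r : ℝ≥0∞ => C * r ^ (s : ℝ)) (𝓝[>] Metric.ediam U)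
        (𝓝 (C * Metric.ediam U ^ (s : ℝ))) :=
      (ENNReal.Tendsto.const_mul (ENNReal.continuous_rpow_const.tendsto _)
        (Or.inr ENNReal.coe_ne_top)).mono_left nhdsWithin_le_nhds
    have hUr₀ : Metric.ediam U < r₀ := hU.trans_lt hεr₀
    have : (𝓝[>] Metric.ediam U).NeBot := nhdsGT_neBot_of_exists_gt ⟨r₀, hUr₀⟩
    rw [mul_comm]
    refine ge_of_tendsto hlim ?_
    filter_upwards [Ioc_mem_nhdsGT hUr₀] with r hr
    refine (measure_mono fun y hy => ?_).trans (hμ x r (pos_of_gt hr.1) hr.2)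
    exact (Metric.edist_le_ediam_of_mem hy hx).trans hr.1.le
  have hle : (C : ℝ≥0∞)⁻¹ • μ ≤ Measure.hausdorffMeasure s := by
    refine Measure.le_hausdorffMeasure _ _ ε hε fun U hU => ?_
    rw [Measure.smul_apply, smul_eq_mul, mul_comm, ← div_eq_mul_inv]
    exact ENNReal.div_le_of_le_mul (measure_le_ediam U hU)
  refine le_dimH_of_hausdorffMeasure_ne_zero (ne_bot_of_le_ne_bot ?_ (hle E))
  simp [hE]

theorem dimH_le_of_frequently_mem {ι : Type*} [Countable ι] {U : ι → Set X} {E : Set X} {s : ℝ≥0}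
    (hs : 0 < s) (hU : ∑' i, Metric.ediam (U i) ^ (s : ℝ) ≠ ⊤)
    (hE : ∀ x ∈ E, ∃ᶠ i in cofinite, x ∈ U i) : dimH E ≤ s := by
  borelize X
  set tail : Finset ι → ℝ≥0∞ := fun F => ∑' i : {i // i ∉ F}, Metric.ediam (U i) ^ (s : ℝ)
  have tail_tendsto : Tendsto tail atTop (𝓝 0) := ENNReal.tendsto_tsum_compl_atTop_zero hU
  have radius_tendsto : Tendsto (fun F => tail F ^ (s : ℝ)⁻¹) atTop (𝓝 0) := by
    have hs' : 0 < (s : ℝ)⁻¹ := by positivity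
    simpa [ENNReal.zero_rpow_of_pos hs'] using tail_tendsto.ennrpow_const (s : ℝ)⁻¹
  have hzero : Measure.hausdorffMeasure (s : ℝ) E ≤ 0 := by
    rw [← tail_tendsto.liminf_eq]
    refine Measure.hausdorffMeasure_le_liminf_tsum _ _ _ radius_tendsto
      (fun F (i : {i // i ∉ F}) => U i) (.of_forall fun F i => ?_) (.of_forall fun F x hx => ?_)
    · rw [ENNReal.le_rpow_inv_iff (by positivity)]
      exact ENNReal.le_tsum (f := fun j : {i // i ∉ F} => Metric.ediam (U j) ^ (s : ℝ)) i
    · obtain ⟨i, hxi, hiF⟩ :=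
        (frequently_cofinite_iff_infinite.mp (hE x hx)).exists_notMem_finset F
      exact mem_iUnion.mpr ⟨⟨i, hiF⟩, hxi⟩
  exact dimH_le_of_hausdorffMeasure_ne_top (hzero.trans_lt ENNReal.zero_lt_top).ne

end HausdorffDimension

section ShrinkingTarget

variable {b : ℕ} {φ ψ : ℕ → ℝ}

theorem Sset_subset_of_eventuallyLE (h : ψ ≤ᶠ[atTop] φ) : Sset b ψ ⊆ Sset b φ :=
  fun _ hx => ⟨hx.1, (hx.2.and_eventually h).mono fun _ hn => hn.1.trans_le hn.2⟩

theorem zero_mem_Sset (h : ∃ᶠ n in atTop, 0 < ψ n) : 0 ∈ Sset b ψ :=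
  ⟨by simp, by simpa using h⟩

theorem frequently_pos_of_Sset_nonempty (h : (Sset b ψ).Nonempty) : ∃ᶠ n in atTop, 0 < ψ n :=
  h.some_mem.2.mono fun _ hn => (abs_nonneg _).trans_lt hn

theorem exists_fin_abs_sub_div_lt (hb : 0 < b) {n : ℕ} {x δ : ℝ} (hx : x ∈ Icc (0 : ℝ) 1)
    (hδ : |(b : ℝ) ^ n * x - round ((b : ℝ) ^ n * x)| < δ) :
    ∃ p : Fin (b ^ n + 1), |x - p / (b : ℝ) ^ n| < δ / (b : ℝ) ^ n := by
  have hpow : (0 : ℝ) < (b : ℝ) ^ n := by positivity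
  have round_nonneg : 0 ≤ round ((b : ℝ) ^ n * x) := by
    rw [round_eq]
    exact Int.floor_nonneg.mpr (by have := hx.1; positivity)
  have round_le : round ((b : ℝ) ^ n * x) ≤ ((b ^ n : ℕ) : ℤ) := by
    rw [round_eq, ← Int.lt_add_one_iff, Int.floor_lt]
    push_cast
    linarith [mul_le_of_le_one_right hpow.le hx.2]
  obtain ⟨p, hp⟩ := Int.eq_ofNat_of_zero_le round_nonneg
  refine ⟨⟨p, by omega⟩, ?_⟩
  rw [hp, Int.cast_natCast] at hδ
  rw [lt_div_iff₀ hpow, ← abs_of_pos hpow, ← abs_mul, abs_of_pos hpow]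
  rwa [sub_mul, div_mul_cancel₀ _ hpow.ne', mul_comm x]

theorem dimH_Sset_le_of_tsum_ne_top (hb : 0 < b) {s : ℝ≥0} (hs : 0 < s)
    (h : ∑' n, (b : ℝ≥0∞) ^ n * ENNReal.ofReal (ψ n / (b : ℝ) ^ n) ^ (s : ℝ) ≠ ⊤) :
    dimH (Sset b ψ) ≤ s := by
  let target (i : Σ n : ℕ, Fin (b ^ n + 1)) : Set ℝ :=
    Metric.eball (i.2 / (b : ℝ) ^ i.1) (ENNReal.ofReal (ψ i.1 / (b : ℝ) ^ i.1))
  refine dimH_le_of_frequently_mem (U := target) hs ?_ fun x hx => ?_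
  · refine ne_top_of_le_ne_top
      (ENNReal.mul_ne_top (a := 2 * 2 ^ (s : ℝ)) (by finiteness) h) ?_
    rw [ENNReal.tsum_sigma', ← ENNReal.tsum_mul_left]
    refine ENNReal.tsum_le_tsum fun n => ?_
    have card_le : ((b ^ n + 1 : ℕ) : ℝ≥0∞) ≤ 2 * (b : ℝ≥0∞) ^ n := by
      have := Nat.one_le_pow n b hb
      exact_mod_cast (by omega : b ^ n + 1 ≤ 2 * b ^ n)
    calc ∑' p, Metric.ediam (target ⟨n, p⟩) ^ (s : ℝ)
        ≤ ∑' _ : Fin (b ^ n + 1), (2 * ENNReal.ofReal (ψ n / (b : ℝ) ^ n)) ^ (s : ℝ) :=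
          ENNReal.tsum_le_tsum fun p => by gcongr; exact Metric.ediam_eball_le
      _ = (b ^ n + 1 : ℕ) * (2 * ENNReal.ofReal (ψ n / (b : ℝ) ^ n)) ^ (s : ℝ) := by
          simp [tsum_fintype]
      _ ≤ 2 * (b : ℝ≥0∞) ^ n * (2 * ENNReal.ofReal (ψ n / (b : ℝ) ^ n)) ^ (s : ℝ) := by
          gcongr
      _ = 2 * 2 ^ (s : ℝ) *
            ((b : ℝ≥0∞) ^ n * ENNReal.ofReal (ψ n / (b : ℝ) ^ n) ^ (s : ℝ)) := by
          rw [ENNReal.mul_rpow_of_nonneg _ _ s.coe_nonneg]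
          ring
  · rw [frequently_cofinite_iff_infinite]
    refine Infinite.of_image Sigma.fst ((Nat.frequently_atTop_iff_infinite.mp hx.2).mono ?_)
    intro n hn
    obtain ⟨p, hp⟩ := exists_fin_abs_sub_div_lt hb hx.1 hn
    refine ⟨⟨n, p⟩, ?_, rfl⟩
    simpa only [mem_ofPred_eq, target, Metric.eball_ofReal, Metric.mem_ball, Real.dist_eq] using hp

theorem mul_rpow_mul_rpow_div_eq_geometric {b C s : ℝ} (hb : 0 < b) (hC : 0 ≤ C) (τ : ℝ) (n : ℕ) :
    b ^ n * (C * (b ^ n) ^ (-τ) / b ^ n) ^ s = C ^ s * (b ^ (1 - (1 + τ) * s)) ^ n := by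
  have hpow : 0 < b ^ n := by positivity
  have base_eq : C * (b ^ n) ^ (-τ) / b ^ n = C * (b ^ n) ^ (-(1 + τ)) := by
    rw [neg_add, Real.rpow_add hpow, Real.rpow_neg_one]
    ring
  rw [base_eq, Real.mul_rpow hC (by positivity), ← Real.rpow_mul hpow.le,
    Real.rpow_pow_comm hb.le, sub_eq_add_neg, Real.rpow_add hpow, Real.rpow_one, neg_mul]
  ring

theorem dimH_Sset_le_inv_one_add (hb : 2 ≤ b) {τ : ℝ} (hτ : -1 < τ) {C : ℝ} (hC : 0 ≤ C)
    (hψ : ∀ᶠ n : ℕ in atTop, ψ n ≤ C * ((b : ℝ) ^ n) ^ (-τ)) :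
    dimH (Sset b ψ) ≤ ENNReal.ofReal (1 + τ)⁻¹ := by
  have hτ' : 0 < 1 + τ := by linarith
  have hb1 : (1 : ℝ) < b := by exact_mod_cast hb
  have hb0 : (0 : ℝ) < b := by positivity
  refine le_of_forall_gt_imp_ge_of_dense fun s' hs' => ?_
  obtain ⟨s, hτs, hss'⟩ := ENNReal.lt_iff_exists_nnreal_btwn.mp hs'
  refine le_trans ?_ hss'.le
  rw [ENNReal.ofReal_lt_coe_iff (by positivity), inv_lt_iff_one_lt_mul₀ hτ'] at hτs
  have hs : 0 < s := by
    by_contra! hs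
    norm_num [nonpos_iff_eq_zero.mp hs] at hτs
  refine (dimH_mono (Sset_subset_of_eventuallyLE hψ)).trans
    (dimH_Sset_le_of_tsum_ne_top (by omega) hs ?_)
  have ratio_lt_one : (b : ℝ) ^ (1 - (1 + τ) * s) < 1 :=
    Real.rpow_lt_one_of_one_lt_of_neg hb1 (by linarith)
  have hsum : Summable fun n : ℕ => C ^ (s : ℝ) * ((b : ℝ) ^ (1 - (1 + τ) * s)) ^ n :=
    (summable_geometric_of_lt_one (by positivity) ratio_lt_one).mul_left _
  convert hsum.tsum_ofReal_ne_top using 3 with n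
  rw [← mul_rpow_mul_rpow_div_eq_geometric hb0 hC, ENNReal.ofReal_mul (by positivity),
    ENNReal.ofReal_rpow_of_nonneg (by positivity) s.coe_nonneg, ENNReal.ofReal_pow hb0.le,
    ENNReal.ofReal_natCast]

theorem lt_one_of_lt_dimH {t : ℝ≥0} {E : Set ℝ} (h : t < dimH E) : t < 1 := by
  have := h.trans_le ((dimH_mono (subset_univ E)).trans Real.dimH_univ.le)
  exact_mod_cast this

theorem frequently_exists_inv_pow_lt_of_lt_dimH (hb : 2 ≤ b) {t : ℝ≥0} (ht : t ≠ 0)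
    (h : t < dimH (Sset b ψ)) :
    ∃ᶠ n : ℕ in atTop, ∃ l : ℕ, t * (n + l : ℝ) ≤ n ∧ ((b : ℝ) ^ l)⁻¹ < ψ n := by
  have hb1 : (1 : ℝ) ≤ b := by exact_mod_cast (by omega : 1 ≤ b)
  have hb0 : (0 : ℝ) < b := by positivity
  have ht0 : (0 : ℝ) < t := by positivity
  have ht1 : (t : ℝ) < 1 := lt_one_of_lt_dimH h
  have hτ : 0 ≤ (t : ℝ)⁻¹ - 1 := sub_nonneg.mpr (one_le_inv₀ ht0 |>.mpr ht1.le)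
  refine fun hnot => h.not_ge ?_
  -- Taking `l` as large as `t * (n + l) ≤ n` permits, `hnot` bounds `ψ n`.
  have hle := dimH_Sset_le_inv_one_add (ψ := ψ) hb (τ := (t : ℝ)⁻¹ - 1) (by linarith) hb0.le ?_
  · simpa using hle
  filter_upwards [hnot] with n hn
  set l := ⌊(n : ℝ) * ((t : ℝ)⁻¹ - 1)⌋₊
  have hl : t * (n + l : ℝ) ≤ n := by
    have := Nat.floor_le (a := (n : ℝ) * ((t : ℝ)⁻¹ - 1)) (by positivity)
    calc t * (n + l : ℝ) ≤ t * (n + n * ((t : ℝ)⁻¹ - 1)) := by gcongr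
      _ = n := by field_simp; ring
  calc ψ n ≤ ((b : ℝ) ^ l)⁻¹ := not_lt.mp fun hlt => hn ⟨l, hl, hlt⟩
    _ = (b : ℝ) ^ (-l : ℝ) := by rw [Real.rpow_neg hb0.le, Real.rpow_natCast]
    _ ≤ (b : ℝ) ^ (1 + n * -((t : ℝ)⁻¹ - 1)) := by
        refine Real.rpow_le_rpow_of_exponent_le hb1 ?_
        linarith [Nat.lt_floor_add_one ((n : ℝ) * ((t : ℝ)⁻¹ - 1))]
    _ = b * ((b : ℝ) ^ n) ^ (-((t : ℝ)⁻¹ - 1)) := by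
        rw [Real.rpow_add hb0, Real.rpow_one, Real.rpow_natCast_mul hb0.le]

theorem frequently_exists_inv_pow_lt (hb : 2 ≤ b) (hS : (Sset b ψ).Nonempty) {t : ℝ≥0}
    (h : t = 0 ∨ t < dimH (Sset b ψ)) :
    ∃ᶠ n : ℕ in atTop, ∃ l : ℕ, t * (n + l : ℝ) ≤ n ∧ ((b : ℝ) ^ l)⁻¹ < ψ n := by
  obtain rfl | ht := eq_or_ne t 0
  · have hb1 : (b : ℝ)⁻¹ < 1 := inv_lt_one_of_one_lt₀ (by exact_mod_cast hb)
    refine (frequently_pos_of_Sset_nonempty hS).mono fun n hn => ?_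
    simpa [inv_pow] using exists_pow_lt_of_lt_one hn hb1
  · exact frequently_exists_inv_pow_lt_of_lt_dimH hb ht (h.resolve_left ht)

end ShrinkingTarget

section Digits

/-- The natural number with base-`b` digits `ω 0, …, ω (m - 1)`, most significant digit first, so
that `digitPrefix ω m` is the integer part of `b ^ m` times the real number `0.ω₀ω₁ω₂…` (up to the
ambiguity of expansions). -/
def digitPrefix {b : ℕ} (ω : ℕ → Fin b) : ℕ → ℕ
  | 0 => 0
  | m + 1 => b * digitPrefix ω m + ω m

/-- The set of reals in `[0, 1]` having a base-`b` expansion with digit `0` at every position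
in `B`; position `p` carries the weight `b ^ (-(p + 1))`. -/
def zeroDigitSet (b : ℕ) (B : Set ℕ) : Set ℝ :=
  Real.ofDigits '' {ω : ℕ → Fin b | ∀ p ∈ B, (ω p : ℕ) = 0}

open Classical in
/-- The law of a sequence of independent base-`b` digits that vanish at the positions in `B` and
are uniformly distributed elsewhere. -/
noncomputable def digitMeasure (b : ℕ) [NeZero b] (B : Set ℕ) : Measure (ℕ → Fin b) :=
  Measure.infinitePi fun p =>
    (if p ∈ B then PMF.pure 0 else PMF.uniformOfFintype (Fin b)).toMeasure

/-- The natural probability measure on `zeroDigitSet b B`: the law of the real number whose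
digits are distributed according to `digitMeasure b B`. -/
noncomputable def zeroDigitMeasure (b : ℕ) [NeZero b] (B : Set ℕ) : Measure ℝ :=
  (digitMeasure b B).map Real.ofDigits

variable {b : ℕ} {B : Set ℕ}

theorem eq_of_digitPrefix_eq {ω ω' : ℕ → Fin b} {m : ℕ}
    (h : digitPrefix ω m = digitPrefix ω' m) {p : ℕ} (hp : p < m) : ω p = ω' p := by
  induction m with
  | zero => omega
  | succ m ih =>
    simp only [digitPrefix] at h
    have last_eq : (ω m : ℕ) = ω' m := by
      simpa [Nat.mul_add_mod, Nat.mod_eq_of_lt] using congrArg (· % b) h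
    obtain hpm | rfl := Nat.lt_succ_iff_lt_or_eq.mp hp
    · exact ih (Nat.eq_of_mul_eq_mul_left (ω 0).pos (by omega)) hpm
    · exact Fin.ext last_eq

theorem pow_mul_ofDigits (ω : ℕ → Fin b) (m : ℕ) :
    (b : ℝ) ^ m * Real.ofDigits ω = digitPrefix ω m + Real.ofDigits fun i => ω (i + m) := by
  have hb : (b : ℝ) ≠ 0 := by exact_mod_cast (ω 0).pos.ne'
  induction m with
  | zero => simp [digitPrefix]
  | succ m ih =>
    have shift : b * Real.ofDigits (fun i => ω (i + m)) =
        ω m + Real.ofDigits fun i => ω (i + (m + 1)) := by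
      rw [Real.ofDigits_eq_sum_add_ofDigits _ 1]
      simp [Real.ofDigitsTerm, mul_add, hb, add_assoc, add_comm 1 m]
      field_simp
    rw [pow_succ', mul_assoc, ih, mul_add, shift, digitPrefix]
    push_cast
    ring

theorem zeroDigitSet_subset_Icc : zeroDigitSet b B ⊆ Icc 0 1 := by
  rintro _ ⟨ω, -, rfl⟩
  exact ⟨Real.ofDigits_nonneg ω, Real.ofDigits_le_one ω⟩

theorem abs_sub_round_le_of_mem_zeroDigitSet {x : ℝ} (hx : x ∈ zeroDigitSet b B) {n l : ℕ}
    (hB : Ico n (n + l) ⊆ B) :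
    |(b : ℝ) ^ n * x - round ((b : ℝ) ^ n * x)| ≤ ((b : ℝ) ^ l)⁻¹ := by
  obtain ⟨ω, hω, rfl⟩ := hx
  have window_eq_zero : ∑ i ∈ Finset.range l, Real.ofDigitsTerm (fun i => ω (i + n)) i = 0 := by
    refine Finset.sum_eq_zero fun i hi => ?_
    have hiB : i + n ∈ B := hB (by simpa [add_comm n] using hi)
    simp [Real.ofDigitsTerm, hω _ hiB]
  refine (round_le _ (digitPrefix ω n : ℤ)).trans ?_
  rw [pow_mul_ofDigits, Int.cast_natCast, add_sub_cancel_left,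
    abs_of_nonneg (Real.ofDigits_nonneg _), Real.ofDigits_eq_sum_add_ofDigits _ l,
    window_eq_zero, zero_add]
  exact mul_le_of_le_one_right (by positivity) (Real.ofDigits_le_one _)

theorem digitPrefix_mem_Icc {ω : ℕ → Fin b} {m : ℕ} {a r : ℝ} (hr : r * (b : ℝ) ^ m ≤ 1)
    (hω : Real.ofDigits ω ∈ Metric.closedBall a r) :
    (digitPrefix ω m : ℤ) ∈ Finset.Icc ⌈(b : ℝ) ^ m * a - 2⌉ ⌊(b : ℝ) ^ m * a + 1⌋ := by
  have hpow : (0 : ℝ) ≤ (b : ℝ) ^ m := by positivity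
  have scaled_le : |(b : ℝ) ^ m * Real.ofDigits ω - (b : ℝ) ^ m * a| ≤ 1 := by
    rw [← mul_sub, abs_mul, abs_of_nonneg hpow, mul_comm]
    exact (mul_le_mul_of_nonneg_right hω hpow).trans hr
  rw [pow_mul_ofDigits, abs_le] at scaled_le
  have := Real.ofDigits_nonneg fun i => ω (i + m)
  have := Real.ofDigits_le_one fun i => ω (i + m)
  rw [Finset.mem_Icc, Int.ceil_le, Int.le_floor]
  constructor <;> push_cast <;> linarith

theorem card_Icc_ceil_floor_le (y : ℝ) : #(Finset.Icc ⌈y - 2⌉ ⌊y + 1⌋) ≤ 4 := by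
  have : (⌊y + 1⌋ : ℝ) ≤ ⌈y - 2⌉ + 3 := by linarith [Int.floor_le (y + 1), Int.le_ceil (y - 2)]
  have : ⌊y + 1⌋ ≤ ⌈y - 2⌉ + 3 := by exact_mod_cast this
  rw [Int.card_Icc]
  omega

variable [NeZero b]

instance : IsProbabilityMeasure (digitMeasure b B) := by
  unfold digitMeasure
  infer_instance

instance : IsProbabilityMeasure (zeroDigitMeasure b B) :=
  Measure.isProbabilityMeasure_map Real.continuous_ofDigits.aemeasurable

open Classical in
theorem ae_digitMeasure_eq_zero : ∀ᵐ ω ∂digitMeasure b B, ∀ p ∈ B, (ω p : ℕ) = 0 := by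
  rw [ae_all_iff]
  intro p
  by_cases hp : p ∈ B
  swap
  · simp [hp]
  have hpres := measurePreserving_eval_infinitePi
    (fun p => (if p ∈ B then PMF.pure 0 else PMF.uniformOfFintype (Fin b)).toMeasure) p
  refine hpres.quasiMeasurePreserving.ae (p := fun c : Fin b => p ∈ B → (c : ℕ) = 0) ?_
  simp [hp, PMF.toMeasure_pure, ae_dirac_eq]

theorem zeroDigitMeasure_zeroDigitSet : zeroDigitMeasure b B (zeroDigitSet b B) = 1 := by
  refine le_antisymm prob_le_one ?_
  calc 1 = digitMeasure b B univ := measure_univ.symm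
    _ ≤ digitMeasure b B (Real.ofDigits ⁻¹' zeroDigitSet b B) :=
        measure_mono_ae (ae_digitMeasure_eq_zero.mono fun ω hω _ => ⟨ω, hω, rfl⟩)
    _ ≤ zeroDigitMeasure b B (zeroDigitSet b B) :=
        Measure.le_map_apply Real.continuous_ofDigits.aemeasurable _

open Classical in
theorem digitMeasure_cylinder_le (c : ℕ → Fin b) (m : ℕ) :
    digitMeasure b B {ω | ∀ p < m, ω p = c p} ≤
      ((b : ℝ≥0∞)⁻¹) ^ (#{p ∈ Finset.range m | p ∉ B}) := by
  have cylinder_eq : {ω : ℕ → Fin b | ∀ p < m, ω p = c p} =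
      (Finset.range m : Set ℕ).pi fun p => {c p} := by
    ext ω
    simp [Set.mem_pi]
  rw [cylinder_eq, digitMeasure, Measure.infinitePi_pi _ fun _ _ => MeasurableSet.singleton _,
    ← Finset.prod_const, Finset.prod_filter]
  refine Finset.prod_le_prod' fun p _ => ?_
  rw [PMF.toMeasure_apply_singleton _ _ (MeasurableSet.singleton _)]
  split_ifs with hp
  · exact PMF.coe_le_one _ _
  · simp

open Classical in
theorem digitMeasure_digitPrefix_eq_le (m : ℕ) (k : ℤ) :
    digitMeasure b B {ω | (digitPrefix ω m : ℤ) = k} ≤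
      ((b : ℝ≥0∞)⁻¹) ^ (#{p ∈ Finset.range m | p ∉ B}) := by
  obtain hempty | ⟨c, hc⟩ := {ω : ℕ → Fin b | (digitPrefix ω m : ℤ) = k}.eq_empty_or_nonempty
  · simp [hempty]
  · refine (measure_mono fun ω hω p hp => ?_).trans (digitMeasure_cylinder_le c m)
    exact eq_of_digitPrefix_eq (by exact_mod_cast hω.trans hc.symm) hp

open Classical in
theorem zeroDigitMeasure_closedBall_le {m : ℕ} {r : ℝ} (hr : r * (b : ℝ) ^ m ≤ 1) (a : ℝ) :
    zeroDigitMeasure b B (Metric.closedBall a r) ≤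
      4 * ((b : ℝ≥0∞)⁻¹) ^ (#{p ∈ Finset.range m | p ∉ B}) := by
  set prefixes := Finset.Icc ⌈(b : ℝ) ^ m * a - 2⌉ ⌊(b : ℝ) ^ m * a + 1⌋
  rw [zeroDigitMeasure, Measure.map_apply Real.continuous_ofDigits.measurable
    Metric.isClosed_closedBall.measurableSet]
  calc digitMeasure b B (Real.ofDigits ⁻¹' Metric.closedBall a r)
      ≤ digitMeasure b B (⋃ k ∈ prefixes, {ω | (digitPrefix ω m : ℤ) = k}) :=
        measure_mono fun ω hω => mem_iUnion₂.mpr ⟨_, digitPrefix_mem_Icc hr hω, rfl⟩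
    _ ≤ ∑ k ∈ prefixes, digitMeasure b B {ω | (digitPrefix ω m : ℤ) = k} :=
        measure_biUnion_finset_le _ _
    _ ≤ ∑ _ ∈ prefixes, ((b : ℝ≥0∞)⁻¹) ^ (#{p ∈ Finset.range m | p ∉ B}) :=
        Finset.sum_le_sum fun k _ => digitMeasure_digitPrefix_eq_le m k
    _ ≤ 4 * ((b : ℝ≥0∞)⁻¹) ^ (#{p ∈ Finset.range m | p ∉ B}) := by
        rw [Finset.sum_const, nsmul_eq_mul]
        gcongr
        exact_mod_cast card_Icc_ceil_floor_le _

end Digits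

open Classical in
theorem le_dimH_pi_zeroDigitSet {ι : Type*} [Fintype ι] {b : ι → ℕ} [∀ i, NeZero (b i)]
    {B : ι → Set ℕ} {s C : ℝ≥0}
    (h : ∀ r : ℝ≥0, 0 < r → r ≤ 1 → ∃ m : ι → ℕ, (∀ i, r * (b i : ℝ) ^ m i ≤ 1) ∧
      ∏ i, ((b i : ℝ≥0∞)⁻¹) ^ (#{p ∈ Finset.range (m i) | p ∉ B i}) ≤ C * r ^ (s : ℝ)) :
    s ≤ dimH (univ.pi fun i => zeroDigitSet (b i) (B i)) := by
  refine le_dimH_of_measure_closedEBall_le (μ := Measure.pi fun i => zeroDigitMeasure (b i) (B i))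
    (C := 4 ^ Fintype.card ι * C) ?_ zero_lt_one fun x r hr hr1 => ?_
  · simp [Measure.pi_pi, zeroDigitMeasure_zeroDigitSet]
  lift r to ℝ≥0 using (hr1.trans_lt ENNReal.one_lt_top).ne
  obtain ⟨m, hm, hprod⟩ := h r (by exact_mod_cast hr) (by exact_mod_cast hr1)
  rw [Metric.closedEBall_coe, closedBall_pi _ r.coe_nonneg, Measure.pi_pi]
  calc ∏ i, zeroDigitMeasure (b i) (B i) (Metric.closedBall (x i) r)
      ≤ ∏ i, 4 * ((b i : ℝ≥0∞)⁻¹) ^ (#{p ∈ Finset.range (m i) | p ∉ B i}) :=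
        Finset.prod_le_prod' fun i _ => zeroDigitMeasure_closedBall_le (hm i) (x i)
    _ = 4 ^ Fintype.card ι * ∏ i, ((b i : ℝ≥0∞)⁻¹) ^ (#{p ∈ Finset.range (m i) | p ∉ B i}) := by
        rw [Finset.prod_mul_distrib, Finset.prod_const, Finset.card_univ]
    _ ≤ 4 ^ Fintype.card ι * (C * r ^ (s : ℝ)) := by gcongr
    _ = (4 ^ Fintype.card ι * C : ℝ≥0) * (r : ℝ≥0∞) ^ (s : ℝ) := by push_cast; ring

theorem prod_inv_pow_le_of_le_sum_log {ι : Type*} [Fintype ι] {b : ι → ℝ≥0} (hb : ∀ i, 0 < b i)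
    {r : ℝ≥0} {s : ℝ} (hr : 0 < r) {f : ι → ℕ}
    (h : s * -Real.log r - ∑ i, Real.log (b i) ≤ ∑ i, Real.log (b i) * f i) :
    ∏ i, (b i)⁻¹ ^ f i ≤ (∏ i, b i) * r ^ s := by
  have hb0 (i : ι) : (0 : ℝ) < b i := hb i
  have hr0 : (0 : ℝ) < r := hr
  have hprod : (0 : ℝ) < ∏ i, (b i : ℝ) := Finset.prod_pos fun i _ => hb0 i
  have hpow (i : ι) : (0 : ℝ) < (b i : ℝ)⁻¹ ^ f i := pow_pos (inv_pos.mpr (hb0 i)) _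
  rw [← NNReal.coe_le_coe]
  push_cast
  rw [← Real.log_le_log_iff (Finset.prod_pos fun i _ => hpow i) (by positivity),
    Real.log_mul hprod.ne' (by positivity), Real.log_rpow hr0,
    Real.log_prod fun i _ => (hpow i).ne', Real.log_prod fun i _ => (hb0 i).ne']
  simp only [Real.log_pow, Real.log_inv, mul_comm (f _ : ℝ), neg_mul, Finset.sum_neg_distrib]
  linarith

theorem exists_nat_mul_le_and_sub_le {c T : ℝ} (hc : 0 < c) (hT : 0 ≤ T) :
    ∃ m : ℕ, c * m ≤ T ∧ T - c ≤ c * m := by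
  refine ⟨⌊T / c⌋₊, (le_div_iff₀' hc).mp (Nat.floor_le (by positivity)), ?_⟩
  have := (div_le_iff₀' hc).mp (Nat.lt_floor_add_one (T / c)).le
  linarith

open Classical in
theorem le_dimH_pi_zeroDigitSet_of_sum_log_mul_card_le {ι : Type*} [Fintype ι] {b : ι → ℕ}
    (hb : ∀ i, 2 ≤ b i) {B : ι → Set ℕ} {s : ℝ≥0}
    (h : ∀ (T : ℝ) (m : ι → ℕ), 0 ≤ T → (∀ i, Real.log (b i) * m i ≤ T) →
      ∑ i, Real.log (b i) * #{p ∈ Finset.range (m i) | p ∈ B i} ≤ (Fintype.card ι - s) * T) :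
    s ≤ dimH (univ.pi fun i => zeroDigitSet (b i) (B i)) := by
  have (i : ι) : NeZero (b i) := ⟨by have := hb i; omega⟩
  have hb0 (i : ι) : (0 : ℝ) < b i := by exact_mod_cast (NeZero.pos (b i))
  have hlog (i : ι) : 0 < Real.log (b i) := Real.log_pos (by exact_mod_cast hb i)
  refine le_dimH_pi_zeroDigitSet (C := ∏ i, (b i : ℝ≥0)) fun r hr hr1 => ?_
  have hr0 : (0 : ℝ) < r := hr
  set T := -Real.log r
  have hT : 0 ≤ T := neg_nonneg.mpr (Real.log_nonpos hr0.le hr1)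
  choose m mul_le sub_le using fun i => exists_nat_mul_le_and_sub_le (hlog i) hT
  refine ⟨m, fun i => ?_, ?_⟩
  · rw [← Real.log_nonpos_iff (by have := hb0 i; positivity),
      Real.log_mul hr0.ne' (pow_pos (hb0 i) _).ne', Real.log_pow, mul_comm (m i : ℝ)]
    linarith [mul_le i]
  have sum_split : ∑ i, Real.log (b i) * #{p ∈ Finset.range (m i) | p ∈ B i} +
      ∑ i, Real.log (b i) * #{p ∈ Finset.range (m i) | p ∉ B i} = ∑ i, Real.log (b i) * m i := by
    simp only [← Finset.sum_add_distrib, ← mul_add, ← Nat.cast_add,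
      Finset.card_filter_add_card_filter_not, Finset.card_range]
  have sum_le : Fintype.card ι * T - ∑ i, Real.log (b i) ≤ ∑ i, Real.log (b i) * m i := by
    simpa only [Finset.sum_sub_distrib, Finset.sum_const, Finset.card_univ, nsmul_eq_mul] using
      Finset.sum_le_sum fun i (_ : i ∈ Finset.univ) => sub_le i
  have hprod := prod_inv_pow_le_of_le_sum_log (b := fun i => (b i : ℝ≥0)) (s := s)
    (f := fun i => #{p ∈ Finset.range (m i) | p ∉ B i}) (fun i => by exact_mod_cast hb0 i) hr
    (by simp only [NNReal.coe_natCast]; linarith [h T m hT mul_le])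
  rw [← ENNReal.coe_rpow_of_nonneg _ s.coe_nonneg, ← ENNReal.coe_mul]
  refine le_trans (le_of_eq ?_) (ENNReal.coe_le_coe.mpr hprod)
  rw [ENNReal.ofNNReal_finsetProd]
  refine Finset.prod_congr rfl fun i _ => ?_
  rw [ENNReal.coe_pow, ENNReal.coe_inv (by exact_mod_cast NeZero.ne (b i)), ENNReal.coe_natCast]

section SparseWindows

variable {ι : Type*} {w : ι → ℝ} {t ε : ℝ} {I : ℕ → ι} {n l : ℕ → ℕ}

/-- A schedule of windows `[n k, n k + l k)`, the `k`-th one in the coordinate `I k`, such that each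
window is short relative to its starting point (when `t > 0`, its end is at most `n k / t`) and the
windows before it have total length at most `ε` times that starting point. Lengths and starting
points in coordinate `i` are counted with weight `w i`, to be comparable between coordinates. -/
structure IsSparseWindows (w : ι → ℝ) (t ε : ℝ) (I : ℕ → ι) (n l : ℕ → ℕ) : Prop where
  mul_end_le_start : ∀ k, t * (n k + l k : ℝ) ≤ n k
  le_start : ∀ k, k ≤ n k
  sum_length_le : ∀ k, ∑ j ∈ Finset.range k, w (I j) * l j ≤ ε * (w (I k) * n k)

/-- The set of positions covered in the coordinate `i` by a schedule of windows. -/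
def windowUnion (I : ℕ → ι) (n l : ℕ → ℕ) (i : ι) : Set ℕ :=
  ⋃ (k) (_ : I k = i), Ico (n k) (n k + l k)

theorem exists_forall_sum_range {α β : Type*} [AddCommMonoid β] (g : ℕ → α → β)
    {P : ℕ → β → α → Prop} (h : ∀ k e, ∃ a, P k e a) :
    ∃ f : ℕ → α, ∀ k, P k (∑ j ∈ Finset.range k, g j (f j)) (f k) := by
  choose next hnext using h
  let total : ℕ → β := fun k => k.rec 0 fun k e => e + g k (next k e)
  have total_eq (k : ℕ) : ∑ j ∈ Finset.range k, g j (next j (total j)) = total k := by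
    induction k with
    | zero => simp [total]
    | succ k ih => rw [Finset.sum_range_succ, ih]
  exact ⟨fun k => next k (total k), fun k => total_eq k ▸ hnext k (total k)⟩

theorem exists_isSparseWindows (hw : ∀ i, 0 < w i) (hε : 0 < ε) (I : ℕ → ι)
    {P : ι → ℕ → ℕ → Prop} (hP : ∀ i, ∃ᶠ n : ℕ in atTop, ∃ l : ℕ, t * (n + l : ℝ) ≤ n ∧ P i n l) :
    ∃ n l, IsSparseWindows w t ε I n l ∧ ∀ k, P (I k) (n k) (l k) := by
  have exists_next (k : ℕ) (e : ℝ) : ∃ a : ℕ × ℕ, t * (a.1 + a.2 : ℝ) ≤ a.1 ∧ k ≤ a.1 ∧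
      e ≤ ε * (w (I k) * a.1) ∧ P (I k) a.1 a.2 := by
    have hlim : Tendsto (fun n : ℕ => ε * (w (I k) * n)) atTop atTop :=
      (tendsto_natCast_atTop_atTop.const_mul_atTop (hw (I k))).const_mul_atTop hε
    obtain ⟨n, ⟨l, hl, hPl⟩, hkn, hen⟩ := ((hP (I k)).and_eventually
      ((eventually_ge_atTop k).and (hlim.eventually_ge_atTop e))).exists
    exact ⟨(n, l), hl, hkn, hen, hPl⟩
  obtain ⟨f, hf⟩ := exists_forall_sum_range (fun k (a : ℕ × ℕ) => w (I k) * a.2) exists_next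
  exact ⟨fun k => (f k).1, fun k => (f k).2,
    ⟨fun k => (hf k).1, fun k => (hf k).2.1, fun k => (hf k).2.2.1⟩, fun k => (hf k).2.2.2⟩

theorem mul_min_sub_le {m n l : ℕ} (hnm : n ≤ m) {c T : ℝ} (ht0 : 0 ≤ t) (ht1 : t ≤ 1)
    (hc : 0 ≤ c) (hT : c * m ≤ T) (h : t * (n + l : ℝ) ≤ n) :
    c * (min (m - n) l : ℕ) ≤ (1 - t) * T := by
  set q := min (m - n) l
  have hqm : (n + q : ℝ) ≤ m := by exact_mod_cast (by omega : n + q ≤ m)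
  have hq : t * (n + q : ℝ) ≤ n := by
    refine le_trans ?_ h
    gcongr
    exact min_le_right _ _
  calc c * q ≤ c * ((1 - t) * (n + q)) := by gcongr; linarith
    _ ≤ c * ((1 - t) * m) := by gcongr
    _ = (1 - t) * (c * m) := by ring
    _ ≤ (1 - t) * T := mul_le_mul_of_nonneg_left hT (sub_nonneg.mpr ht1)

namespace IsSparseWindows

-- Only the last window that starts before its cut-off counts; the earlier ones are negligible.
theorem sum_mul_min_le (h : IsSparseWindows w t ε I n l) (hw : ∀ i, 0 ≤ w i) (ht0 : 0 ≤ t)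
    (ht1 : t ≤ 1) (hε : 0 ≤ ε) {m : ι → ℕ} {T : ℝ} (hT : 0 ≤ T) (hm : ∀ i, w i * m i ≤ T)
    (K : ℕ) :
    ∑ k ∈ Finset.range K, w (I k) * (min (m (I k) - n k) (l k) : ℕ) ≤ (1 - t + ε) * T := by
  induction K with
  | zero => simpa using mul_nonneg (add_nonneg (sub_nonneg.mpr ht1) hε) hT
  | succ K ih =>
    rw [Finset.sum_range_succ]
    obtain hmn | hnm := le_total (m (I K)) (n K)
    · simpa [Nat.sub_eq_zero_of_le hmn] using ih
    have earlier_le : ∑ k ∈ Finset.range K, w (I k) * (min (m (I k) - n k) (l k) : ℕ) ≤ ε * T :=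
      calc _ ≤ ∑ k ∈ Finset.range K, w (I k) * l k := by
            gcongr with k
            · exact hw _
            · exact min_le_right _ _
        _ ≤ ε * (w (I K) * n K) := h.sum_length_le K
        _ ≤ ε * (w (I K) * m (I K)) := by gcongr; exact hw _
        _ ≤ ε * T := by gcongr; exact hm _
    linarith [mul_min_sub_le hnm ht0 ht1 (hw (I K)) (hm (I K)) (h.mul_end_le_start K)]

open Classical in
theorem card_filter_mem_windowUnion_le (h : IsSparseWindows w t ε I n l) {i : ι} {M K : ℕ}
    (hMK : M ≤ K) : #{p ∈ Finset.range M | p ∈ windowUnion I n l i} ≤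
      ∑ k ∈ Finset.range K with I k = i, min (M - n k) (l k) := by
  have hsub : {p ∈ Finset.range M | p ∈ windowUnion I n l i} ⊆
      {k ∈ Finset.range K | I k = i}.biUnion fun k => Finset.Ico (n k) (min M (n k + l k)) := by
    intro p hp
    simp only [windowUnion, Finset.mem_filter, Finset.mem_range, mem_iUnion, mem_Ico] at hp
    obtain ⟨hpM, k, hk, hnp, hpl⟩ := hp
    have := h.le_start k
    simp only [Finset.mem_biUnion, Finset.mem_filter, Finset.mem_range, Finset.mem_Ico]
    exact ⟨k, ⟨by omega, hk⟩, hnp, lt_min hpM hpl⟩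
  refine (Finset.card_le_card hsub).trans (Finset.card_biUnion_le.trans_eq ?_)
  refine Finset.sum_congr rfl fun k _ => ?_
  rw [Nat.card_Ico]
  omega

open Classical in
theorem sum_mul_card_filter_mem_windowUnion_le [Fintype ι] (h : IsSparseWindows w t ε I n l)
    (hw : ∀ i, 0 ≤ w i) (ht0 : 0 ≤ t) (ht1 : t ≤ 1) (hε : 0 ≤ ε) {m : ι → ℕ} {T : ℝ}
    (hT : 0 ≤ T) (hm : ∀ i, w i * m i ≤ T) :
    ∑ i, w i * #{p ∈ Finset.range (m i) | p ∈ windowUnion I n l i} ≤ (1 - t + ε) * T := by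
  set K := ∑ i, m i
  have hmK (i : ι) : m i ≤ K := Finset.single_le_sum (fun _ _ => Nat.zero_le _) (Finset.mem_univ i)
  calc ∑ i, w i * #{p ∈ Finset.range (m i) | p ∈ windowUnion I n l i}
      ≤ ∑ i, w i * (∑ k ∈ Finset.range K with I k = i, min (m i - n k) (l k) : ℕ) := by
        gcongr with i
        · exact hw i
        · exact h.card_filter_mem_windowUnion_le (hmK i)
    _ = ∑ i, ∑ k ∈ Finset.range K with I k = i, w (I k) * (min (m (I k) - n k) (l k) : ℕ) := by
        refine Finset.sum_congr rfl fun i _ => ?_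
        rw [Nat.cast_sum, Finset.mul_sum]
        refine Finset.sum_congr rfl fun k hk => ?_
        rw [(Finset.mem_filter.mp hk).2]
    _ = ∑ k ∈ Finset.range K, w (I k) * (min (m (I k) - n k) (l k) : ℕ) :=
        Finset.sum_fiberwise _ _ _
    _ ≤ (1 - t + ε) * T := h.sum_mul_min_le hw ht0 ht1 hε hT hm K

end IsSparseWindows

theorem exists_forall_frequently_eq (ι : Type*) [Countable ι] [Nonempty ι] :
    ∃ I : ℕ → ι, ∀ i, ∃ᶠ k in atTop, I k = i := by
  obtain ⟨f, hf⟩ := exists_surjective_nat (ι × ℕ)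
  refine ⟨fun k => (f k).1, fun i => Nat.frequently_atTop_iff_infinite.mpr ?_⟩
  refine Infinite.of_image (fun k => (f k).2) (infinite_univ.mono fun a _ => ?_)
  obtain ⟨k, hk⟩ := hf (i, a)
  exact ⟨k, by simp [hk], by simp [hk]⟩

end SparseWindows

section Product

variable {ι : Type*} {b : ι → ℕ} {ψ : ι → ℕ → ℝ}

theorem pi_zeroDigitSet_windowUnion_subset {I : ℕ → ι} {n l : ℕ → ℕ}
    (hI : ∀ i, ∃ᶠ k in atTop, I k = i) (hn : Tendsto n atTop atTop)
    (hψ : ∀ k, ((b (I k) : ℝ) ^ l k)⁻¹ < ψ (I k) (n k)) :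
    univ.pi (fun i => zeroDigitSet (b i) (windowUnion I n l i)) ⊆
      {x | ∀ i, x i ∈ Sset (b i) (ψ i)} := by
  intro x hx i
  refine ⟨zeroDigitSet_subset_Icc (hx i trivial), hn.frequently ((hI i).mono ?_)⟩
  rintro k rfl
  refine (abs_sub_round_le_of_mem_zeroDigitSet (hx _ trivial) ?_).trans_lt (hψ k)
  exact subset_iUnion₂_of_subset k rfl subset_rfl

variable [Fintype ι] [Nonempty ι]

theorem card_sub_one_add_le_dimH_pi_Sset (hb : ∀ i, 2 ≤ b i) {t : ℝ≥0} (ht : t ≤ 1)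
    (h : ∀ i, ∃ᶠ n : ℕ in atTop, ∃ l : ℕ, t * (n + l : ℝ) ≤ n ∧ ((b i : ℝ) ^ l)⁻¹ < ψ i n) :
    (Fintype.card ι - 1 + t : ℝ≥0∞) ≤ dimH {x : ι → ℝ | ∀ i, x i ∈ Sset (b i) (ψ i)} := by
  have hlog (i : ι) : 0 < Real.log (b i) := Real.log_pos (by exact_mod_cast hb i)
  refine ENNReal.le_of_forall_nnreal_lt fun s hs => ?_
  have hε : 0 < (Fintype.card ι - 1 + t - s : ℝ) := by
    have hcard : (1 : ℝ≥0) ≤ Fintype.card ι := by exact_mod_cast Fintype.card_pos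
    have hs' : s < (Fintype.card ι - 1 : ℝ≥0) + t := by exact_mod_cast hs
    rw [← NNReal.coe_lt_coe, NNReal.coe_add, NNReal.coe_sub hcard] at hs'
    push_cast at hs'
    linarith
  obtain ⟨I, hI⟩ := exists_forall_frequently_eq ι
  obtain ⟨n, l, hnl, hψ⟩ := exists_isSparseWindows hlog hε I h
  have hn : Tendsto n atTop atTop := tendsto_atTop_mono hnl.le_start tendsto_id
  refine le_trans ?_ (dimH_mono (pi_zeroDigitSet_windowUnion_subset hI hn hψ))
  refine le_dimH_pi_zeroDigitSet_of_sum_log_mul_card_le hb fun T m hT hm => ?_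
  convert hnl.sum_mul_card_filter_mem_windowUnion_le (fun i => (hlog i).le) t.coe_nonneg
    (by exact_mod_cast ht) hε.le hT hm using 2
  ring

end Product

theorem stmt12_general {ι : Type*} [Fintype ι] [Nonempty ι] {b : ι → ℕ} (hb : ∀ i, 2 ≤ b i)
    {ψ : ι → ℕ → ℝ} (hS : ∀ i, (Sset (b i) (ψ i)).Nonempty) :
    ⨅ i, ((Fintype.card ι : ℝ≥0∞) - 1 + dimH (Sset (b i) (ψ i))) ≤
      dimH {x : ι → ℝ | ∀ i, x i ∈ Sset (b i) (ψ i)} := by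
  rw [← ENNReal.add_iInf]
  set δ := ⨅ i, dimH (Sset (b i) (ψ i))
  have card_sub_one_add_le : ∀ t : ℝ≥0, t = 0 ∨ t < δ → (Fintype.card ι - 1 + t : ℝ≥0∞) ≤
      dimH {x : ι → ℝ | ∀ i, x i ∈ Sset (b i) (ψ i)} := by
    intro t ht
    refine card_sub_one_add_le_dimH_pi_Sset hb ?_ fun i =>
      frequently_exists_inv_pow_lt (hb i) (hS i) (ht.imp_right fun h => h.trans_le (iInf_le _ i))
    obtain rfl | htδ := ht
    · exact zero_le_one
    · exact (lt_one_of_lt_dimH (htδ.trans_le (iInf_le _ (Classical.arbitrary ι)))).le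
  refine add_le_of_le_tsub_left_of_le (by simpa using card_sub_one_add_le 0 (.inl rfl)) ?_
  refine ENNReal.le_of_forall_nnreal_lt fun t ht => ?_
  exact ENNReal.le_sub_of_add_le_left (by finiteness) (card_sub_one_add_le t (.inr ht))

/-- lower bound for the dimension of a product of shrinking target sets. -/
theorem stmt12 (d : ℕ) (hd : 1 ≤ d) (ψ : Fin d → ℕ → ℝ) (hψ : ∀ i n, 0 < ψ i n)
    (b : Fin d → ℕ) (hb : ∀ i, 2 ≤ b i) :
    (⨅ i, ((d : ℝ≥0∞) - 1 + dimH (Sset (b i) (ψ i)))) ≤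
      dimH {x : Fin d → ℝ | ∀ i, x i ∈ Sset (b i) (ψ i)} := by
  have : Nonempty (Fin d) := ⟨⟨0, hd⟩⟩
  simpa using stmt12_general hb fun i => ⟨0, zero_mem_Sset (.of_forall (hψ i))⟩
end
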